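/- (Theorem 1.2, second formula.) Let n ≥ 4 be a natural number. The genus-zero Hurwitz number h_{2^1,1^2} with two degenerate branch points, one of reduced ramification type 2^1 (a permutation of cycle type (3,1^{n-3})) and one of reduced ramification type 1^2 (a permutation of cycle type (2,2,1^{n-4})), and m = 2n−6 simple branch points, satisfies h_{2^1,1^2} = 3·(3n^2 − 15n + 20)·((2n−6)!/(n−4)!)·n^{n−6}. -/

import Mathlib

open Equiv

/-!
Hurwitz counted the transitive factorizations of a permutation of `n` points with cycles of lengths
`a₁, …, aₖ` into the minimal number `n + k - 2` of transpositions: there are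
`(n + k - 2)! n ^ (k - 3) ∏ aᵢ ^ aᵢ / (aᵢ - 1)!` of them. By induction on the number of
transpositions, this amounts to a cut-and-join recursion, which Hurwitz's version of Abel's binomial
theorem verifies.

Let `σ` be a 3-cycle and `τ = swap a b * swap c d`. If `σ` fixes `d`, then
`τ⁻¹ * σ⁻¹ = swap a b * π` with `π = swap c d * σ⁻¹`, and the only effect of multiplying by
`swap c d` is to insert `d` into the cycle of `c`; so transitivity of the tuple depends on
`swap a b` and the remaining transpositions alone. If `a` and `b` lie in different cycles of `π`,
`swap a b` joins these cycles, and the remaining transpositions are either transitive or have two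
orbits separating `a` from `b`; if they lie in the same cycle, `swap a b` cuts it. In both cases
Hurwitz's formula gives the number of completions as a function of `n` and of the numbers of points
of `{a, b}` and of `{c, d}` moved by `σ`. At most one of these numbers is `2`, so after exchanging
names every `τ` is covered, and the Hurwitz number is the sum over all relative positions.
-/

namespace HurwitzNumber

open Finset

/-! ### Hurwitz's multivariate Abel identities -/

section AbelIdentities

variable {ι R : Type*} [DecidableEq ι]

section SubsetSums

variable [AddCommMonoid R]

lemma sum_powerset_sum_erase (U : Finset ι) (f : ι → Finset ι → Finset ι → R) :
    ∑ T ∈ U.powerset, ∑ i ∈ T, f i (T.erase i) (U \ T) =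
      ∑ i ∈ U, ∑ T ∈ (U.erase i).powerset, f i T (U.erase i \ T) := by
  rw [sum_sigma', sum_sigma']
  refine sum_bij' (fun p _ ↦ ⟨p.2, p.1.erase p.2⟩) (fun p _ ↦ ⟨insert p.1 p.2, p.1⟩)
    ?_ ?_ ?_ ?_ ?_
  · rintro ⟨T, i⟩ h
    simp only [mem_sigma, mem_powerset] at h ⊢
    exact ⟨h.1 h.2, erase_subset_erase _ h.1⟩
  · rintro ⟨i, T⟩ h
    simp only [mem_sigma, mem_powerset] at h ⊢
    exact ⟨insert_subset h.1 (h.2.trans (erase_subset _ _)), mem_insert_self _ _⟩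
  · rintro ⟨T, i⟩ h
    simp only [mem_sigma, mem_powerset] at h
    simp [insert_erase h.2]
  · rintro ⟨i, T⟩ h
    simp only [mem_sigma, mem_powerset] at h
    have : i ∉ T := fun hi ↦ by simpa using h.2 hi
    simp [erase_insert this]
  · rintro ⟨T, i⟩ h
    simp only [mem_sigma, mem_powerset] at h
    have : U.erase i \ T.erase i = U \ T := by grind
    simp only [this]

lemma sum_powerset_sdiff_comm (U : Finset ι) (f : Finset ι → Finset ι → R) :
    ∑ T ∈ U.powerset, f T (U \ T) = ∑ T ∈ U.powerset, f (U \ T) T := by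
  refine sum_nbij' (U \ ·) (U \ ·) ?_ ?_ ?_ ?_ ?_ <;> intro T h <;>
    simp_all only [mem_powerset, sdiff_subset, Finset.sdiff_sdiff_eq_self]

lemma sum_powerset_sum_sdiff_erase (U : Finset ι) (f : ι → Finset ι → Finset ι → R) :
    ∑ T ∈ U.powerset, ∑ i ∈ U \ T, f i T ((U \ T).erase i) =
      ∑ i ∈ U, ∑ T ∈ (U.erase i).powerset, f i T (U.erase i \ T) := by
  rw [sum_powerset_sdiff_comm U (fun A B ↦ ∑ i ∈ B, f i A (B.erase i)),
    sum_powerset_sum_erase U (fun i A B ↦ f i B A)]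
  exact sum_congr rfl fun i _ ↦ (sum_powerset_sdiff_comm (U.erase i) (f i)).symm

end SubsetSums

section CommRing

variable [CommRing R] {x : ι → R} {a b : R} {i : ι} {T U : Finset ι}

/-- Hurwitz's multivariate form `a (a + x_T) ^ (|T| - 1)` of the Abel polynomial, where
`x_T = ∑ i ∈ T, x i`; its value at `T = ∅` is the formal one `a (a + x_T)⁻¹ = 1`. -/
def abelPoly (x : ι → R) (a : R) (T : Finset ι) : R :=
  if T = ∅ then 1 else a * (a + ∑ i ∈ T, x i) ^ (#T - 1)

/-- The power `(a + x_T) ^ |T|`, the companion of `abelPoly` in Abel's identity. -/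
def powPoly (x : ι → R) (a : R) (T : Finset ι) : R :=
  (a + ∑ i ∈ T, x i) ^ #T

lemma abelPoly_mul_add (x : ι → R) (a : R) (T : Finset ι) :
    abelPoly x a T * (a + ∑ i ∈ T, x i) = a * powPoly x a T := by
  rcases T.eq_empty_or_nonempty with rfl | hT
  · simp [abelPoly, powPoly]
  · rw [abelPoly, if_neg hT.ne_empty, powPoly, mul_assoc, pow_sub_one_mul hT.card_ne_zero]

lemma powPoly_insert (hi : i ∉ T) :
    powPoly x a (insert i T) = (a + x i + ∑ j ∈ T, x j) * powPoly x (a + x i) T := by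
  rw [powPoly, powPoly, sum_insert hi, card_insert_of_notMem hi, pow_succ', add_assoc]

lemma abelPoly_insert (hi : i ∉ T) :
    abelPoly x a (insert i T) = a * powPoly x (a + x i) T := by
  rw [abelPoly, if_neg (insert_ne_empty _ _), powPoly, sum_insert hi, card_insert_of_notMem hi,
    Nat.add_sub_cancel, add_assoc]

lemma powPoly_eq_abelPoly_add_sum (x : ι → R) (a : R) (T : Finset ι) :
    powPoly x a T = abelPoly x a T + ∑ i ∈ T, x i * powPoly x (a + x i) (T.erase i) := by
  rcases T.eq_empty_or_nonempty with rfl | hT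
  · simp [abelPoly, powPoly]
  have h : ∀ i ∈ T, x i * powPoly x (a + x i) (T.erase i) =
      x i * (a + ∑ j ∈ T, x j) ^ (#T - 1) := fun i hi ↦ by
    rw [powPoly, card_erase_of_mem hi, add_assoc, add_sum_erase _ _ hi]
  rw [sum_congr rfl h, ← sum_mul, abelPoly, if_neg hT.ne_empty, powPoly, ← add_mul,
    mul_pow_sub_one hT.card_ne_zero]

lemma sum_powPoly_mul_powPoly_eq_add_sum (x : ι → R) (a b : R) (U : Finset ι) :
    ∑ T ∈ U.powerset, powPoly x a T * powPoly x b (U \ T) =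
      ∑ T ∈ U.powerset, abelPoly x a T * powPoly x b (U \ T) +
        ∑ i ∈ U, x i *
          ∑ T ∈ (U.erase i).powerset, powPoly x (a + x i) T * powPoly x b (U.erase i \ T) := by
  simp only [mul_sum]
  rw [← sum_powerset_sum_erase U
    (fun i A B ↦ x i * (powPoly x (a + x i) A * powPoly x b B)), ← sum_add_distrib]
  refine sum_congr rfl fun T _ ↦ ?_
  rw [powPoly_eq_abelPoly_add_sum x a T, add_mul, sum_mul]
  simp only [mul_assoc]

lemma sum_abelPoly_mul_powPoly_insert (hi : i ∉ U) :
    ∑ T ∈ (insert i U).powerset, abelPoly x a T * powPoly x b (insert i U \ T) =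
      (a + b + x i + ∑ j ∈ U, x j) *
          ∑ T ∈ U.powerset, abelPoly x a T * powPoly x (b + x i) (U \ T)
        - a * ∑ T ∈ U.powerset, powPoly x a T * powPoly x (b + x i) (U \ T)
        + a * ∑ T ∈ U.powerset, powPoly x (a + x i) T * powPoly x b (U \ T) := by
  rw [sum_powerset_insert hi, mul_sum, mul_sum, mul_sum, ← sum_sub_distrib]
  congr 1
  · refine sum_congr rfl fun T hT ↦ ?_
    rw [mem_powerset] at hT
    rw [insert_sdiff_of_notMem _ (fun h ↦ hi (hT h)),
      powPoly_insert (fun h ↦ hi (sdiff_subset h)), ← sum_sdiff hT]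
    linear_combination -powPoly x (b + x i) (U \ T) * abelPoly_mul_add x a T
  · refine sum_congr rfl fun T hT ↦ ?_
    rw [mem_powerset] at hT
    rw [insert_sdiff_insert, sdiff_insert_of_notMem hi, abelPoly_insert (fun h ↦ hi (hT h)),
      mul_assoc]

/-- The two identities need each other: Abel's identity for `insert i U` uses the invariance for
`U`, and the invariance for `U` uses Abel's identity for `U`. -/
lemma sum_abelPoly_mul_powPoly_and_invariance (x : ι → R) (N : ℕ) :
    ∀ U : Finset ι, #U = N →
      (∀ a b, ∑ T ∈ U.powerset, abelPoly x a T * powPoly x b (U \ T) = powPoly x (a + b) U) ∧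
      ∀ a b a' b', a + b = a' + b' → ∑ T ∈ U.powerset, powPoly x a T * powPoly x b (U \ T) =
        ∑ T ∈ U.powerset, powPoly x a' T * powPoly x b' (U \ T) := by
  induction N with
  | zero =>
    intro U hU
    rw [card_eq_zero] at hU
    simp [hU, abelPoly, powPoly]
  | succ N ih =>
    intro U hU
    have abel (a b) :
        ∑ T ∈ U.powerset, abelPoly x a T * powPoly x b (U \ T) = powPoly x (a + b) U := by
      obtain ⟨i, U, hi, rfl, hc⟩ := card_eq_succ.1 hU
      rw [sum_abelPoly_mul_powPoly_insert hi, (ih U hc).1,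
        (ih U hc).2 a (b + x i) (a + x i) b (by ring), powPoly_insert hi]
      ring_nf
    refine ⟨abel, fun a b a' b' h ↦ ?_⟩
    rw [sum_powPoly_mul_powPoly_eq_add_sum, sum_powPoly_mul_powPoly_eq_add_sum x a', abel, abel, h]
    congr 1
    refine sum_congr rfl fun i hi ↦ ?_
    rw [(ih (U.erase i) (by rw [card_erase_of_mem hi, hU, Nat.add_sub_cancel])).2 _ _ (a' + x i) b'
      (by linear_combination h)]

lemma sum_abelPoly_mul_powPoly (x : ι → R) (a b : R) (U : Finset ι) :
    ∑ T ∈ U.powerset, abelPoly x a T * powPoly x b (U \ T) = powPoly x (a + b) U :=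
  (sum_abelPoly_mul_powPoly_and_invariance x _ U rfl).1 a b

lemma sum_abelPoly_mul_abelPoly (x : ι → R) (a b : R) (U : Finset ι) :
    ∑ T ∈ U.powerset, abelPoly x a T * abelPoly x b (U \ T) = abelPoly x (a + b) U := by
  have expand : ∀ T ∈ U.powerset, abelPoly x a T * abelPoly x b (U \ T) =
      abelPoly x a T * powPoly x b (U \ T) -
        ∑ i ∈ U \ T, x i * (abelPoly x a T * powPoly x (b + x i) ((U \ T).erase i)) := by
    intro T _
    rw [powPoly_eq_abelPoly_add_sum x b, mul_add, mul_sum, eq_sub_iff_add_eq]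
    simp only [mul_left_comm]
  rw [sum_congr rfl expand, sum_sub_distrib, sum_abelPoly_mul_powPoly,
    sum_powerset_sum_sdiff_erase U (fun i A B ↦ x i * (abelPoly x a A * powPoly x (b + x i) B)),
    powPoly_eq_abelPoly_add_sum x (a + b) U]
  simp only [← mul_sum, sum_abelPoly_mul_powPoly, ← add_assoc, add_sub_cancel_right]

end CommRing

section Field

variable {K : Type*} [Field K] {x : ι → K} {a : K} {T : Finset ι}

/-- The power `(a + x_T) ^ (|T| - 2)`. It is the factor `n ^ (ℓ - 3)` of Hurwitz's formula for the
ground set made of one cycle of length `a` and cycles of lengths `x i`, `i ∈ T`. -/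
def hurwitzPow (x : ι → K) (a : K) (T : Finset ι) : K :=
  (a + ∑ i ∈ T, x i) ^ ((#T : ℤ) - 2)

lemma abelPoly_eq_mul_zpow (ha : a ≠ 0) :
    abelPoly x a T = a * (a + ∑ i ∈ T, x i) ^ ((#T : ℤ) - 1) := by
  rcases T.eq_empty_or_nonempty with rfl | hT
  · simp [abelPoly, ha]
  · rw [abelPoly, if_neg hT.ne_empty, ← zpow_natCast, Nat.cast_pred hT.card_pos]

lemma abelPoly_erase {i : ι} (hi : i ∈ T) (ha : a + x i ≠ 0) :
    abelPoly x (a + x i) (T.erase i) = (a + x i) * hurwitzPow x a T := by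
  rw [abelPoly_eq_mul_zpow ha, card_erase_of_mem hi, add_assoc, add_sum_erase _ _ hi, hurwitzPow,
    Nat.cast_pred (card_pos.2 ⟨i, hi⟩), sub_sub]
  rfl

end Field

section OrderedField

variable {K : Type*} [Field K] [LinearOrder K] [IsStrictOrderedRing K]
variable {x : ι → K} {a b : K} {T U : Finset ι}

lemma abelPoly_eq_mul_hurwitzPow (ha : 0 < a) (hx : ∀ i ∈ T, 0 < x i) :
    abelPoly x a T = a * (a + ∑ i ∈ T, x i) * hurwitzPow x a T := by
  have hs : 0 < a + ∑ i ∈ T, x i := add_pos_of_pos_of_nonneg ha (sum_nonneg fun i hi ↦ (hx i hi).le)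
  rw [abelPoly_eq_mul_zpow ha.ne', hurwitzPow, mul_assoc, ← zpow_one_add₀ hs.ne']
  ring_nf

lemma hurwitzPow_eq_sub_sum (ha : 0 < a) (hx : ∀ i ∈ T, 0 < x i) :
    hurwitzPow x a T = abelPoly x a T / a ^ 2 -
      ∑ i ∈ T, x i / (a * (a + x i)) * abelPoly x (a + x i) (T.erase i) := by
  have h : ∀ i ∈ T, x i / (a * (a + x i)) * abelPoly x (a + x i) (T.erase i) =
      x i * (hurwitzPow x a T / a) := fun i hi ↦ by
    have := add_pos ha (hx i hi)
    rw [abelPoly_erase hi this.ne']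
    field_simp
  rw [sum_congr rfl h, ← sum_mul, abelPoly_eq_mul_hurwitzPow ha hx]
  field_simp
  ring

lemma sum_hurwitzPow_mul_abelPoly (ha : 0 < a) (hx : ∀ i ∈ U, 0 < x i) (b : K) :
    ∑ T ∈ U.powerset, hurwitzPow x a T * abelPoly x b (U \ T) = abelPoly x (a + b) U / a ^ 2 -
      ∑ i ∈ U, x i / (a * (a + x i)) * abelPoly x (a + b + x i) (U.erase i) := by
  have expand : ∀ T ∈ U.powerset, hurwitzPow x a T * abelPoly x b (U \ T) =
      abelPoly x a T * abelPoly x b (U \ T) / a ^ 2 - ∑ i ∈ T, x i / (a * (a + x i)) *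
        (abelPoly x (a + x i) (T.erase i) * abelPoly x b (U \ T)) := by
    intro T hT
    rw [hurwitzPow_eq_sub_sum ha fun i hi ↦ hx i (mem_powerset.1 hT hi), sub_mul, sum_mul,
      div_mul_eq_mul_div]
    simp only [mul_assoc]
  rw [sum_congr rfl expand, sum_sub_distrib, ← sum_div, sum_abelPoly_mul_abelPoly,
    sum_powerset_sum_erase U
      (fun i A B ↦ x i / (a * (a + x i)) * (abelPoly x (a + x i) A * abelPoly x b B))]
  simp only [← mul_sum, sum_abelPoly_mul_abelPoly, add_right_comm a _ b]

lemma sum_hurwitzPow_mul_abelPoly_eq_mul (ha : 0 < a) (hb : 0 < b) (hx : ∀ i ∈ U, 0 < x i) :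
    ∑ T ∈ U.powerset, hurwitzPow x a T * abelPoly x b (U \ T) = hurwitzPow x (a + b) U *
      ((a + b) * (a + b + ∑ i ∈ U, x i) / a ^ 2 -
        ∑ i ∈ U, x i * (a + b + x i) / (a * (a + x i))) := by
  have h : ∀ i ∈ U, x i / (a * (a + x i)) * abelPoly x (a + b + x i) (U.erase i) =
      hurwitzPow x (a + b) U * (x i * (a + b + x i) / (a * (a + x i))) := fun i hi ↦ by
    rw [abelPoly_erase hi (add_pos (add_pos ha hb) (hx i hi)).ne']
    ring
  rw [sum_hurwitzPow_mul_abelPoly ha hx, sum_congr rfl h, ← mul_sum,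
    abelPoly_eq_mul_hurwitzPow (add_pos ha hb) hx]
  ring

/-- Since `(a + x_T) + (b + x_{U \ T})` does not depend on `T`, multiplying the sum by it turns one
of the two factors `hurwitzPow` into an `abelPoly`. -/
lemma sum_hurwitzPow_mul_hurwitzPow (ha : 0 < a) (hb : 0 < b) (hx : ∀ i ∈ U, 0 < x i) :
    a * b * ∑ T ∈ U.powerset, hurwitzPow x a T * hurwitzPow x b (U \ T) =
      (a + b + ∑ i ∈ U, x i) ^ ((#U : ℤ) - 3) *
        ((a + b) * (a + b + ∑ i ∈ U, x i) * (1 / a + 1 / b) -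
          ∑ i ∈ U, x i * (a + b + x i) * (1 / (a + x i) + 1 / (b + x i))) := by
  set n := a + b + ∑ i ∈ U, x i with hn
  have hn0 : 0 < n :=
    add_pos_of_pos_of_nonneg (add_pos ha hb) (sum_nonneg fun i hi ↦ (hx i hi).le)
  have hpow : hurwitzPow x (a + b) U = n * n ^ ((#U : ℤ) - 3) := by
    rw [hurwitzPow, ← hn, ← zpow_one_add₀ hn0.ne']
    ring_nf
  have absorb : ∀ T ∈ U.powerset, a * b * n * (hurwitzPow x a T * hurwitzPow x b (U \ T)) =
      a * (hurwitzPow x a T * abelPoly x b (U \ T)) +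
        b * (hurwitzPow x b (U \ T) * abelPoly x a T) := by
    intro T hT
    rw [mem_powerset] at hT
    rw [abelPoly_eq_mul_hurwitzPow ha fun i hi ↦ hx i (hT hi),
      abelPoly_eq_mul_hurwitzPow hb fun i hi ↦ hx i (sdiff_subset hi), hn, ← sum_sdiff hT]
    ring
  have split : ∑ i ∈ U, x i * (a + b + x i) * (1 / (a + x i) + 1 / (b + x i)) =
      a * (∑ i ∈ U, x i * (a + b + x i) / (a * (a + x i))) +
        b * ∑ i ∈ U, x i * (a + b + x i) / (b * (b + x i)) := by
    rw [mul_sum, mul_sum, ← sum_add_distrib]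
    refine sum_congr rfl fun i hi ↦ ?_
    have := hx i hi
    field_simp
  have hsum : a * b * n * ∑ T ∈ U.powerset, hurwitzPow x a T * hurwitzPow x b (U \ T) =
      n * (n ^ ((#U : ℤ) - 3) * ((a + b) * n * (1 / a + 1 / b) -
        ∑ i ∈ U, x i * (a + b + x i) * (1 / (a + x i) + 1 / (b + x i)))) := by
    rw [mul_sum, sum_congr rfl absorb, sum_add_distrib, ← mul_sum, ← mul_sum,
      ← sum_powerset_sdiff_comm U fun A B ↦ hurwitzPow x b A * abelPoly x a B,
      sum_hurwitzPow_mul_abelPoly_eq_mul ha hb hx, sum_hurwitzPow_mul_abelPoly_eq_mul hb ha hx,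
      add_comm b a, ← hn, hpow, split]
    field_simp
    ring
  refine mul_left_cancel₀ hn0.ne' ?_
  rw [← hsum]
  ring

end OrderedField

end AbelIdentities

/-! ### Weights of cycle lengths -/

section PartialFractions

lemma sum_neg_one_pow_mul_choose_mul_pow_eq_zero {R : Type*} [CommRing R] {r s : ℕ} (h : s < r) :
    ∑ a ∈ range (r + 1), (-1 : R) ^ a * r.choose a * (a : R) ^ s = 0 := by
  have hdiff := congrFun (fwdDiff_iter_pow_eq_zero_of_lt (R := R) h) 0
  rw [fwdDiff_iter_eq_sum_shift] at hdiff
  simp only [zsmul_eq_mul, zero_add, nsmul_eq_mul, mul_one, Pi.zero_apply] at hdiff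
  have hsign : ∀ a ∈ range (r + 1), (-1 : R) ^ a * r.choose a * (a : R) ^ s =
      (-1) ^ r * ((((-1 : ℤ) ^ (r - a) * (r.choose a : ℤ) : ℤ) : R) * (a : R) ^ s) := by
    intro a ha
    obtain ⟨c, rfl⟩ := Nat.exists_eq_add_of_le (mem_range_succ_iff.1 ha)
    have hc : (-1 : R) ^ c * (-1) ^ c = 1 := by rw [← mul_pow, neg_one_mul, neg_neg, one_pow]
    push_cast
    rw [Nat.add_sub_cancel_left, pow_add]
    linear_combination (-(-1 : R) ^ a * ((a + c).choose a) * (a : R) ^ s) * hc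
  rw [sum_congr rfl hsign, ← mul_sum, hdiff, mul_zero]

lemma sum_range_choose_succ_mul {R : Type*} [NonAssocSemiring R] (r : ℕ) (f : ℕ → R) :
    ∑ a ∈ range (r + 2), ((r + 1).choose a : R) * f a =
      ∑ a ∈ range (r + 1), (r.choose a : R) * (f a + f (a + 1)) := by
  simp only [mul_add, sum_add_distrib]
  rw [sum_range_succ', sum_congr rfl fun a _ ↦ by rw [Nat.choose_succ_succ', Nat.cast_add, add_mul],
    sum_add_distrib, sum_range_succ (fun a ↦ (r.choose (a + 1) : R) * f (a + 1)),
    sum_range_succ' (fun a ↦ (r.choose a : R) * f a)]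
  simp only [Nat.choose_succ_self, Nat.choose_zero_right, Nat.cast_zero, zero_mul, add_zero]
  abel

lemma choose_mul_choose_comm (a i c : ℕ) :
    (a + (i + c)).choose a * (i + c).choose i = (a + (i + c)).choose i * (a + c).choose a := by
  have ha := Nat.choose_mul (n := a + (i + c)) (Nat.le_add_right a i)
  have hi := Nat.choose_mul (n := a + (i + c)) (Nat.le_add_left i a)
  rw [Nat.add_sub_cancel_left, Nat.add_sub_cancel_left] at ha
  rw [Nat.add_sub_cancel, show a + (i + c) - i = a + c by lia] at hi
  rw [← ha, ← hi, Nat.choose_symm_add]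

variable {K : Type*} [Field K]

lemma sum_neg_one_pow_mul_choose_div_add (r : ℕ) {y : K} (hy : ∀ j ≤ r, (j : K) + y ≠ 0) :
    ∑ a ∈ range (r + 1), (-1) ^ a * (r.choose a : K) / (a + y) =
      r.factorial / ∏ j ∈ range (r + 1), ((j : K) + y) := by
  induction r generalizing y with
  | zero => simp
  | succ r ih =>
    have hy' (j : ℕ) (hj : j ≤ r) : (j : K) + (y + 1) ≠ 0 := by
      simpa [add_comm, add_left_comm, add_assoc] using hy (j + 1) (by lia)
    have hprod (j : ℕ) : ((j + 1 : ℕ) : K) + y = j + (y + 1) := by push_cast; ring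
    have hrec : ∑ a ∈ range (r + 2), (-1) ^ a * ((r + 1).choose a : K) / (a + y) =
        ∑ a ∈ range (r + 1), (-1) ^ a * (r.choose a : K) / (a + y) -
          ∑ a ∈ range (r + 1), (-1) ^ a * (r.choose a : K) / (a + (y + 1)) := by
      rw [← sum_sub_distrib, sum_congr rfl fun a _ ↦ by rw [mul_comm ((-1) ^ a), mul_div_assoc],
        sum_range_choose_succ_mul r fun a ↦ (-1) ^ a / ((a : K) + y)]
      refine sum_congr rfl fun a _ ↦ ?_
      rw [hprod, pow_succ]
      ring
    have htop := hy (r + 1) le_rfl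
    have hbot := hy 0 (Nat.zero_le _)
    have hmid : ∏ j ∈ range r, ((j : K) + (y + 1)) ≠ 0 :=
      prod_ne_zero_iff.2 fun j hj ↦ hy' j (mem_range.1 hj).le
    rw [hrec, ih fun j hj ↦ hy j (by lia), ih hy', prod_range_succ _ (r + 1),
      prod_range_succ' (fun j : ℕ ↦ (j : K) + y), prod_range_succ (fun j : ℕ ↦ (j : K) + (y + 1)),
      ← hprod r]
    simp only [hprod]
    rw [hprod] at htop
    rw [Nat.factorial_succ]
    push_cast at hbot ⊢
    field_simp
    ring

lemma sum_neg_one_pow_mul_choose_mul_pow_div_add {r s : ℕ} (hs : s ≤ r) {y : K}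
    (hy : ∀ j ≤ r, (j : K) + y ≠ 0) :
    ∑ a ∈ range (r + 1), (-1) ^ a * r.choose a * (a : K) ^ s / (a + y) =
      (-y) ^ s * (r.factorial / ∏ j ∈ range (r + 1), ((j : K) + y)) := by
  induction s with
  | zero => simp [← sum_neg_one_pow_mul_choose_div_add r hy]
  | succ s ih =>
    have divide : ∀ a ∈ range (r + 1), (-1) ^ a * r.choose a * (a : K) ^ (s + 1) / (a + y) =
        (-1) ^ a * r.choose a * (a : K) ^ s +
          -y * ((-1) ^ a * r.choose a * (a : K) ^ s / (a + y)) := fun a ha ↦ by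
      have := hy a (mem_range_succ_iff.1 ha)
      field_simp
      ring
    rw [sum_congr rfl divide, sum_add_distrib, sum_neg_one_pow_mul_choose_mul_pow_eq_zero hs,
      ← mul_sum, ih (by lia), zero_add, pow_succ', mul_assoc]

/-- Expand `(x - a) ^ (x - a)` binomially in powers of `x` and sum over `a` first. -/
lemma sum_choose_mul_pow_mul_pow_div_add (x : ℕ) {y : K} (hy : ∀ j ≤ x, (j : K) + y ≠ 0) :
    ∑ a ∈ range (x + 1), (x.choose a : K) * (a : K) ^ a * ((x - a : ℕ) : K) ^ (x - a) / (a + y) =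
      ∑ i ∈ range (x + 1), (x.choose i : K) * (x : K) ^ i * y ^ (x - i) *
        ((x - i).factorial / ∏ j ∈ range (x - i + 1), ((j : K) + y)) := by
  have hsq (c : ℕ) : (-1 : K) ^ c * (-1) ^ c = 1 := by
    rw [← mul_pow, neg_one_mul, neg_neg, one_pow]
  have expand : ∀ a ∈ range (x + 1),
      (x.choose a : K) * (a : K) ^ a * ((x - a : ℕ) : K) ^ (x - a) / (a + y) =
        ∑ i ∈ range (x - a + 1), (x.choose i : K) * (x : K) ^ i * ((-1) ^ (x - i) *
          ((-1) ^ a * (x - i).choose a * (a : K) ^ (x - i) / (a + y))) := by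
    intro a ha
    have hax := mem_range_succ_iff.1 ha
    rw [Nat.cast_sub hax, sub_eq_add_neg, add_pow, mul_sum, sum_div]
    refine sum_congr rfl fun i hi ↦ ?_
    obtain ⟨c, hc⟩ := Nat.exists_eq_add_of_le (mem_range_succ_iff.1 hi)
    obtain rfl : x = a + (i + c) := by lia
    have hchoose := congrArg (Nat.cast (R := K)) (choose_mul_choose_comm a i c)
    rw [show a + (i + c) - a - i = c by lia, show a + (i + c) - a = i + c by lia,
      show a + (i + c) - i = a + c by lia, neg_pow, pow_add (-1 : K) a c, pow_add (a : K) a c,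
      ← mul_div_assoc, ← mul_div_assoc]
    congr 1
    push_cast at hchoose ⊢
    linear_combination (a : K) ^ a * ((a : K) + (i + c)) ^ i * (-1) ^ c * (a : K) ^ c * hchoose -
      ((a : K) + (i + c)) ^ i * (a + (i + c)).choose i * (-1) ^ c * (a + c).choose a *
        (a : K) ^ a * (a : K) ^ c * hsq a
  rw [sum_congr rfl expand, sum_comm' (t' := range (x + 1)) (s' := fun i ↦ range (x - i + 1))
    (by intro a i; simp only [mem_range]; lia)]
  refine sum_congr rfl fun i _ ↦ ?_
  rw [← mul_sum, ← mul_sum, sum_neg_one_pow_mul_choose_mul_pow_div_add le_rfl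
    fun j hj ↦ hy j (hj.trans (Nat.sub_le x i)), neg_pow]
  linear_combination ((x.choose i : K) * (x : K) ^ i * y ^ (x - i) *
    ((x - i).factorial / ∏ j ∈ range (x - i + 1), ((j : K) + y))) * hsq (x - i)

end PartialFractions

section CycleWeights

/-- The weight `a ^ a / a!` of the self-maps of a set with `a` elements. -/
def mapWeight (a : ℕ) : ℚ := (a : ℚ) ^ a / a.factorial

/-- The factor `a ^ (a + 1) / a!` contributed by a cycle of length `a` to Hurwitz's formula. -/
def cycleWeight (a : ℕ) : ℚ := a * mapWeight a

/-- The sum of `ψ(a) ψ(k - a) / (a + y)` over the ways to cut a cycle of length `k` into cycles of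
lengths `a` and `k - a`, where `ψ = mapWeight`. -/
def cutSum (k : ℕ) (y : ℚ) : ℚ :=
  ∑ a ∈ Ico 1 k, mapWeight a * mapWeight (k - a) / (a + y)

lemma mapWeight_zero : mapWeight 0 = 1 := by simp [mapWeight]

lemma cycleWeight_ne_zero {a : ℕ} (ha : a ≠ 0) : cycleWeight a ≠ 0 := by
  unfold cycleWeight mapWeight
  positivity

lemma mapWeight_mul_mapWeight {x a : ℕ} (ha : a ≤ x) :
    mapWeight a * mapWeight (x - a) =
      (x.choose a : ℚ) * (a : ℚ) ^ a * ((x - a : ℕ) : ℚ) ^ (x - a) / x.factorial := by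
  rw [Nat.cast_choose ℚ ha, mapWeight, mapWeight]
  field_simp

lemma sum_Ico_cut_reflect {M : Type*} [AddCommMonoid M] (k : ℕ) (f : ℕ → ℕ → M) :
    ∑ a ∈ Ico 1 k, f a (k - a) = ∑ a ∈ Ico 1 k, f (k - a) a := by
  refine sum_nbij' (k - ·) (k - ·) ?_ ?_ ?_ ?_ ?_ <;> intro a ha <;> rw [mem_Ico] at ha
  · exact mem_Ico.2 (by lia)
  · exact mem_Ico.2 (by lia)
  · lia
  · lia
  · rw [show k - (k - a) = a by lia]

lemma cutSum_eq_reflect (k : ℕ) (y : ℚ) :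
    cutSum k y = ∑ a ∈ Ico 1 k, mapWeight a * mapWeight (k - a) / ((k - a : ℕ) + y) := by
  rw [sum_Ico_cut_reflect k fun a b ↦ mapWeight a * mapWeight b / (b + y), cutSum]
  exact sum_congr rfl fun a _ ↦ by rw [mul_comm (mapWeight a)]

lemma sum_range_mapWeight_div_add {x : ℕ} (hx : 0 < x) (y : ℚ) :
    ∑ a ∈ range (x + 1), mapWeight a * mapWeight (x - a) / (a + y) =
      cutSum x y + mapWeight x / y + mapWeight x / (x + y) := by
  rw [sum_range_succ, range_eq_Ico, sum_eq_sum_Ico_succ_bot hx, cutSum, Nat.sub_self,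
    mapWeight_zero]
  simp only [Nat.sub_zero, CharP.cast_eq_zero, zero_add, one_mul, mul_one]
  ring

lemma factorial_mul_prod_range_add (y r : ℕ) :
    (y.factorial : ℚ) * ∏ j ∈ range (r + 1), ((j : ℚ) + y) = y * (y + r).factorial := by
  induction r with
  | zero => simp [mul_comm]
  | succ r ih =>
    rw [prod_range_succ, ← mul_assoc, ih, ← add_assoc, Nat.factorial_succ]
    push_cast
    ring

lemma cycleWeight_mul_sum_range (x : ℕ) {y : ℕ} (hy : 0 < y) :
    cycleWeight y * ∑ a ∈ range (x + 1), mapWeight a * mapWeight (x - a) / (a + y) =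
      (∑ i ∈ range (x + 1), (x : ℚ) ^ i * (y : ℚ) ^ (x + y - i) * (x + y).choose i) /
        (x + y).factorial := by
  have hψ : ∀ a ∈ range (x + 1), mapWeight a * mapWeight (x - a) / (a + y : ℚ) =
      (x.choose a : ℚ) * (a : ℚ) ^ a * ((x - a : ℕ) : ℚ) ^ (x - a) / (a + y) / x.factorial :=
    fun a ha ↦ by rw [mapWeight_mul_mapWeight (mem_range_succ_iff.1 ha), div_right_comm]
  rw [sum_congr rfl hψ, ← sum_div,
    sum_choose_mul_pow_mul_pow_div_add x fun j _ ↦ by positivity, sum_div, sum_div, mul_sum]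
  refine sum_congr rfl fun i hi ↦ ?_
  obtain ⟨c, rfl⟩ := Nat.exists_eq_add_of_le (mem_range_succ_iff.1 hi)
  have hprod := factorial_mul_prod_range_add y c
  have hpos : ∏ j ∈ range (c + 1), ((j : ℚ) + y) ≠ 0 := prod_ne_zero_iff.2 fun j _ ↦ by positivity
  rw [Nat.cast_add_choose, show i + c + y = i + (y + c) by lia, Nat.cast_add_choose,
    Nat.add_sub_cancel_left, Nat.add_sub_cancel_left, cycleWeight, mapWeight, pow_add _ y c]
  field_simp
  linear_combination (-((i + c : ℕ) : ℚ) ^ i) * hprod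

lemma sum_range_add_sum_range_reflect {M : Type*} [AddCommMonoid M] (f : ℕ → M) (x y : ℕ) :
    ∑ i ∈ range (x + 1), f i + ∑ j ∈ range (y + 1), f (x + y - j) =
      ∑ i ∈ range (x + y + 1), f i + f x := by
  have hreflect : ∑ j ∈ range (y + 1), f (x + y - j) = ∑ j ∈ range (y + 1), f (x + j) := by
    rw [← sum_range_reflect]
    refine sum_congr rfl fun j hj ↦ congrArg f ?_
    have := mem_range.1 hj
    lia
  rw [hreflect, add_assoc x y 1, sum_range_add f x (y + 1), sum_range_succ f x, add_right_comm]

/-- The two sums are complementary parts of the binomial expansion of `(x + z) ^ (x + z)`. -/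
lemma cycleWeight_mul_sum_range_add_comm {x z : ℕ} (hx : 0 < x) (hz : 0 < z) :
    cycleWeight z * ∑ a ∈ range (x + 1), mapWeight a * mapWeight (x - a) / (a + z) +
        cycleWeight x * ∑ a ∈ range (z + 1), mapWeight a * mapWeight (z - a) / (a + x) =
      mapWeight (x + z) + mapWeight x * mapWeight z := by
  have hreflect : ∀ j ∈ range (z + 1), (z : ℚ) ^ j * (x : ℚ) ^ (z + x - j) * (z + x).choose j =
      (x : ℚ) ^ (x + z - j) * (z : ℚ) ^ (x + z - (x + z - j)) * (x + z).choose (x + z - j) := by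
    intro j hj
    have hj' : j ≤ x + z := (mem_range_succ_iff.1 hj).trans (Nat.le_add_left z x)
    rw [Nat.choose_symm hj', Nat.sub_sub_self hj', add_comm z x, mul_comm ((z : ℚ) ^ j)]
  have hψ : mapWeight x * mapWeight z =
      (x : ℚ) ^ x * (z : ℚ) ^ (x + z - x) * (x + z).choose x / (x + z).factorial := by
    have := mapWeight_mul_mapWeight (Nat.le_add_right x z)
    rw [Nat.add_sub_cancel_left] at this ⊢
    rw [this]
    ring
  rw [cycleWeight_mul_sum_range x hz, cycleWeight_mul_sum_range z hx, sum_congr rfl hreflect,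
    add_comm z x, ← add_div, sum_range_add_sum_range_reflect
      fun i ↦ (x : ℚ) ^ i * (z : ℚ) ^ (x + z - i) * (x + z).choose i, add_div, ← hψ, ← add_pow,
    mapWeight.eq_1 (x + z), Nat.cast_add]

lemma cycleWeight_mul_cutSum_add_comm {x z : ℕ} (hx : 0 < x) (hz : 0 < z) :
    cycleWeight x * cutSum z x + cycleWeight z * cutSum x z =
      mapWeight (x + z) - 2 * mapWeight x * mapWeight z := by
  have h := cycleWeight_mul_sum_range_add_comm hx hz
  rw [sum_range_mapWeight_div_add hx, sum_range_mapWeight_div_add hz] at h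
  have hends : cycleWeight z * (mapWeight x / z + mapWeight x / (x + z)) +
      cycleWeight x * (mapWeight z / x + mapWeight z / (z + x)) =
        3 * (mapWeight x * mapWeight z) := by
    unfold cycleWeight
    field_simp
    ring
  linear_combination h - hends

lemma sum_card_powerset_abel (K : ℕ) :
    ∑ j ∈ range (K + 1), (K.choose j : ℚ) * ((1 + j : ℚ) ^ (j - 1) * ((K - j : ℕ) : ℚ) ^ (K - j)) =
      (1 + K) ^ K := by
  have h := sum_abelPoly_mul_powPoly (fun _ ↦ (1 : ℚ)) 1 0 (range K)
  have hT : ∀ T ∈ (range K).powerset, abelPoly (fun _ ↦ (1 : ℚ)) 1 T *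
      powPoly (fun _ ↦ (1 : ℚ)) 0 (range K \ T) =
        (1 + #T : ℚ) ^ (#T - 1) * ((K - #T : ℕ) : ℚ) ^ (K - #T) := by
    intro T hT
    rw [mem_powerset] at hT
    rw [abelPoly, powPoly]
    simp only [sum_const, nsmul_eq_mul, mul_one, zero_add, card_sdiff_of_subset hT, card_range,
      one_mul]
    split_ifs with h0
    · simp [h0]
    · rfl
  rw [sum_congr rfl hT, sum_powerset_apply_card
    (fun j ↦ (1 + j : ℚ) ^ (j - 1) * ((K - j : ℕ) : ℚ) ^ (K - j)), card_range] at h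
  simpa [powPoly] using h

lemma cutSum_zero {k : ℕ} (hk : 0 < k) : cutSum k 0 = mapWeight k - mapWeight k / k := by
  obtain ⟨K, rfl⟩ := Nat.exists_eq_add_of_le' hk
  have hterm : ∀ j ∈ range (K + 1), (K.choose j : ℚ) *
      ((1 + j : ℚ) ^ (j - 1) * ((K - j : ℕ) : ℚ) ^ (K - j)) =
        K.factorial * (mapWeight (j + 1) * mapWeight (K - j) / (j + 1 : ℕ)) := by
    intro j hj
    have hpow : (1 + j : ℚ) ^ (j + 1) = (1 + j) ^ (j - 1) * (1 + j) ^ 2 := by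
      rcases j.eq_zero_or_pos with rfl | hj0
      · simp
      · rw [← pow_add]
        congr 1
        lia
    rw [Nat.cast_choose ℚ (mem_range_succ_iff.1 hj), mapWeight, mapWeight, Nat.factorial_succ]
    push_cast
    rw [add_comm (j : ℚ) 1, hpow]
    field_simp
  have habel := sum_card_powerset_abel K
  rw [sum_congr rfl hterm, ← mul_sum, sum_range_succ, Nat.sub_self, mapWeight_zero] at habel
  have hcut : cutSum (K + 1) 0 =
      ∑ j ∈ range K, mapWeight (j + 1) * mapWeight (K - j) / (j + 1 : ℕ) := by
    rw [cutSum, sum_Ico_eq_sum_range, Nat.add_sub_cancel]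
    refine sum_congr rfl fun j _ ↦ ?_
    rw [add_zero, add_comm 1 j, Nat.add_sub_add_right]
  have hψ : K.factorial * mapWeight (K + 1) = (1 + K) ^ K := by
    rw [mapWeight, Nat.factorial_succ, pow_succ]
    push_cast
    field_simp
    ring
  rw [← hcut, ← hψ] at habel
  have := mul_left_cancel₀ (Nat.cast_ne_zero.2 K.factorial_ne_zero) habel
  linear_combination this

end CycleWeights

section CutAndJoinIdentity

variable {ι : Type*} [DecidableEq ι]

lemma sum_sum_erase_comm {M : Type*} [AddCommMonoid M] (U : Finset ι) (f : ι → ι → M) :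
    ∑ j ∈ U, ∑ i ∈ U.erase j, f i j = ∑ j ∈ U, ∑ i ∈ U.erase j, f j i :=
  sum_comm' fun i j ↦ by simp only [mem_erase]; tauto

variable {x : ι → ℕ} {U : Finset ι}

lemma sum_cut_cycleWeight (hx : ∀ i ∈ U, 0 < x i) {k : ℕ} (hk : 0 < k) :
    ∑ a ∈ Ico 1 k, cycleWeight a * cycleWeight (k - a) *
        ∑ T ∈ U.powerset, hurwitzPow (fun i ↦ (x i : ℚ)) a T *
          hurwitzPow (fun i ↦ (x i : ℚ)) (k - a : ℕ) (U \ T) =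
      (k + ∑ i ∈ U, (x i : ℚ)) ^ ((#U : ℤ) - 3) *
        (2 * (k + ∑ i ∈ U, (x i : ℚ)) * (k - 1) * mapWeight k -
          2 * ∑ i ∈ U, x i * (k + x i : ℚ) * cutSum k (x i)) := by
  set n := k + ∑ i ∈ U, (x i : ℚ) with hn
  have hterm : ∀ a ∈ Ico 1 k, cycleWeight a * cycleWeight (k - a) *
      ∑ T ∈ U.powerset, hurwitzPow (fun i ↦ (x i : ℚ)) a T *
        hurwitzPow (fun i ↦ (x i : ℚ)) (k - a : ℕ) (U \ T) =
      n ^ ((#U : ℤ) - 3) * (k * n * (mapWeight a * mapWeight (k - a) / (a + 0) +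
        mapWeight a * mapWeight (k - a) / ((k - a : ℕ) + 0)) - ∑ i ∈ U, x i * (k + x i : ℚ) *
          (mapWeight a * mapWeight (k - a) / (a + x i) +
            mapWeight a * mapWeight (k - a) / ((k - a : ℕ) + x i))) := by
    intro a ha
    obtain ⟨ha, hak⟩ := mem_Ico.1 ha
    have hsum := sum_hurwitzPow_mul_hurwitzPow (x := fun i ↦ (x i : ℚ)) (a := (a : ℚ))
      (b := (k - a : ℕ)) (Nat.cast_pos.2 ha) (Nat.cast_pos.2 (Nat.sub_pos_of_lt hak))
      fun i hi ↦ Nat.cast_pos.2 (hx i hi)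
    rw [← Nat.cast_add, Nat.add_sub_cancel' hak.le, ← hn] at hsum
    rw [cycleWeight, cycleWeight, mul_mul_mul_comm, mul_comm ((a : ℚ) * _), mul_assoc, hsum,
      mul_left_comm, mul_sub, mul_sum]
    congr 2
    · ring
    · exact sum_congr rfl fun i _ ↦ by ring
  have hcut (y : ℚ) : ∑ a ∈ Ico 1 k, (mapWeight a * mapWeight (k - a) / (a + y) +
      mapWeight a * mapWeight (k - a) / ((k - a : ℕ) + y)) = 2 * cutSum k y := by
    rw [sum_add_distrib, ← cutSum_eq_reflect, ← cutSum, two_mul]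
  have hk' : (k : ℚ) ≠ 0 := Nat.cast_ne_zero.2 hk.ne'
  rw [sum_congr rfl hterm, ← mul_sum, sum_sub_distrib, ← mul_sum, hcut, sum_comm, cutSum_zero hk,
    mul_sum _ _ (2 : ℚ)]
  congr 2
  · field_simp
  · refine sum_congr rfl fun i _ ↦ ?_
    rw [← mul_sum, hcut]
    ring

lemma sum_sum_erase_add (U : Finset ι) (y : ι → ℚ) :
    ∑ i ∈ U, ∑ j ∈ U.erase i, (y i + y j) = 2 * (#U - 1) * ∑ i ∈ U, y i := by
  have hrow : ∀ i ∈ U, ∑ j ∈ U.erase i, (y i + y j) = (#U - 2) * y i + ∑ j ∈ U, y j := by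
    intro i hi
    rw [sum_add_distrib, sum_const, nsmul_eq_mul, cast_card_erase_of_mem hi, ← add_sum_erase U y hi]
    ring
  rw [sum_congr rfl hrow, sum_add_distrib, ← mul_sum, sum_const, nsmul_eq_mul]
  ring

/-- Cutting the cycle `k` and joining the cycles `i` and `k` contribute together, by
`cycleWeight_mul_cutSum_add_comm`, a quantity linear in the lengths. -/
lemma sum_sum_erase_cutSum (hx : ∀ i ∈ U, 0 < x i) :
    2 * ∑ k ∈ U, ∑ i ∈ U.erase k, (x k * x i * (x k + x i) * cutSum (x k) (x i) *
        cycleWeight (x i) * ∏ l ∈ (U.erase k).erase i, cycleWeight (x l) : ℚ) =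
      ∑ k ∈ U, ∑ i ∈ U.erase k,
        (x k * x i * (cycleWeight (x k + x i) * ∏ l ∈ (U.erase k).erase i, cycleWeight (x l)) : ℚ)
      - 4 * (#U - 1) * (∑ i ∈ U, (x i : ℚ)) * ∏ l ∈ U, cycleWeight (x l) := by
  have hpair : ∀ k ∈ U, ∀ i ∈ U.erase k,
      (x k * x i * (x k + x i) * cutSum (x k) (x i) * cycleWeight (x i) *
          ∏ l ∈ (U.erase k).erase i, cycleWeight (x l) +
        x i * x k * (x i + x k) * cutSum (x i) (x k) * cycleWeight (x k) *
          ∏ l ∈ (U.erase i).erase k, cycleWeight (x l) : ℚ) =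
      x k * x i * (cycleWeight (x k + x i) * ∏ l ∈ (U.erase k).erase i, cycleWeight (x l)) -
        2 * (∏ l ∈ U, cycleWeight (x l)) * (x k + x i) := by
    intro k hk i hi
    rw [erase_right_comm (a := i), ← mul_prod_erase U _ hk, ← mul_prod_erase _ _ hi,
      cycleWeight.eq_1 (x k + x i)]
    have h := cycleWeight_mul_cutSum_add_comm (hx k hk) (hx i (mem_of_mem_erase hi))
    push_cast
    simp only [cycleWeight] at h ⊢
    linear_combination (x k * x i * (x k + x i) *
      ∏ l ∈ (U.erase k).erase i, (x l * mapWeight (x l) : ℚ)) * h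
  have hsymm (G : ι → ι → ℚ) : 2 * ∑ k ∈ U, ∑ i ∈ U.erase k, G k i =
      ∑ k ∈ U, ∑ i ∈ U.erase k, (G k i + G i k) := by
    simp only [sum_add_distrib]
    rw [sum_sum_erase_comm U G, two_mul]
  rw [hsymm, sum_congr rfl fun k hk ↦ sum_congr rfl (hpair k hk)]
  simp only [sum_sub_distrib, ← mul_sum]
  rw [sum_sum_erase_add]
  ring

lemma mul_sum_cut_cycleWeight_mul_prod (hx : ∀ i ∈ U, 0 < x i) {n : ℚ}
    (hn : n = ∑ i ∈ U, (x i : ℚ)) {k : ι} (hk : k ∈ U) :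
    (x k : ℚ) * ∑ a ∈ Ico 1 (x k), cycleWeight a * cycleWeight (x k - a) *
      (∏ l ∈ U.erase k, cycleWeight (x l)) *
        ∑ T ∈ (U.erase k).powerset, hurwitzPow (fun i ↦ (x i : ℚ)) a T *
          hurwitzPow (fun i ↦ (x i : ℚ)) (x k - a : ℕ) (U.erase k \ T) =
      n ^ ((#U : ℤ) - 4) * (2 * n * (∏ l ∈ U, cycleWeight (x l)) * (x k - 1)) -
        n ^ ((#U : ℤ) - 4) * (2 * ∑ i ∈ U.erase k, (x k : ℚ) * x i * (x k + x i) *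
          cutSum (x k) (x i) * cycleWeight (x i) *
            ∏ l ∈ (U.erase k).erase i, cycleWeight (x l)) := by
  have hprod : ∀ i ∈ U.erase k, (x k : ℚ) * x i * (x k + x i) * cutSum (x k) (x i) *
      cycleWeight (x i) * ∏ l ∈ (U.erase k).erase i, cycleWeight (x l) =
      x k * (∏ l ∈ U.erase k, cycleWeight (x l)) *
        (x i * (x k + x i) * cutSum (x k) (x i)) := fun i hi ↦ by
    rw [← mul_prod_erase _ _ hi]
    ring
  simp only [mul_right_comm _ (∏ l ∈ U.erase k, cycleWeight (x l))]
  rw [← sum_mul, sum_cut_cycleWeight (fun i hi ↦ hx i (mem_of_mem_erase hi)) (hx k hk),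
    add_sum_erase U (fun i ↦ (x i : ℚ)) hk, ← hn, card_erase_of_mem hk,
    Nat.cast_pred (card_pos.2 ⟨k, hk⟩), sub_sub, ← mul_prod_erase U _ hk, cycleWeight.eq_1 (x k),
    ← mul_sub, sum_congr rfl hprod, ← mul_sum, show (1 + 3 : ℤ) = 4 from rfl]
  ring

/-- The cut-and-join recursion for Hurwitz's formula `n ^ (ℓ - 3) ∏ cycleWeight (x i)`: the first
sum joins two cycles, the second cuts one and distributes the others over the two pieces. -/
lemma sum_join_add_sum_cut (hU : U.Nonempty) (hx : ∀ i ∈ U, 0 < x i) {n : ℚ}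
    (hn : n = ∑ i ∈ U, (x i : ℚ)) :
    ∑ i ∈ U, ∑ j ∈ U.erase i, (x i : ℚ) * x j * (n ^ ((#U : ℤ) - 4) *
        (cycleWeight (x i + x j) * ∏ l ∈ (U.erase i).erase j, cycleWeight (x l))) +
      ∑ k ∈ U, (x k : ℚ) * ∑ a ∈ Ico 1 (x k), cycleWeight a * cycleWeight (x k - a) *
        (∏ l ∈ U.erase k, cycleWeight (x l)) *
          ∑ T ∈ (U.erase k).powerset, hurwitzPow (fun i ↦ (x i : ℚ)) a T *
            hurwitzPow (fun i ↦ (x i : ℚ)) (x k - a : ℕ) (U.erase k \ T) =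
    2 * (n + #U - 2) * (n ^ ((#U : ℤ) - 3) * ∏ l ∈ U, cycleWeight (x l)) := by
  have hn0 : 0 < n := hn ▸ sum_pos (fun i hi ↦ Nat.cast_pos.2 (hx i hi)) hU
  have hjoin : ∑ i ∈ U, ∑ j ∈ U.erase i, (x i : ℚ) * x j * (n ^ ((#U : ℤ) - 4) *
      (cycleWeight (x i + x j) * ∏ l ∈ (U.erase i).erase j, cycleWeight (x l))) =
        n ^ ((#U : ℤ) - 4) * ∑ i ∈ U, ∑ j ∈ U.erase i, (x i : ℚ) * x j *
          (cycleWeight (x i + x j) * ∏ l ∈ (U.erase i).erase j, cycleWeight (x l)) := by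
    simp only [mul_sum, mul_left_comm _ (n ^ ((#U : ℤ) - 4))]
  have hlength : ∑ k ∈ U, ((x k : ℚ) - 1) = n - #U := by simp [hn]
  rw [sum_congr rfl fun k hk ↦ mul_sum_cut_cycleWeight_mul_prod hx hn hk, sum_sub_distrib,
    hjoin]
  simp only [← mul_sum]
  have hpow : n ^ ((#U : ℤ) - 3) = n ^ ((#U : ℤ) - 4) * n := by
    rw [← zpow_add_one₀ hn0.ne']
    ring_nf
  rw [sum_sum_erase_cutSum hx, hlength, hpow, ← hn]
  ring

end CutAndJoinIdentity

/-! ### Sums over lists -/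

section ListSum

variable {α M R κ : Type*}

/-- The sum of the weight `w` over all lists of length `m` with entries in `E`. -/
def listSum [AddCommMonoid M] (E : Finset α) (m : ℕ) (w : List α → M) : M :=
  ∑ f ∈ Fintype.piFinset fun _ : Fin m ↦ E, w (List.ofFn f)

section AddCommMonoid

variable [AddCommMonoid M] {E E' : Finset α} {m : ℕ}

lemma listSum_zero (E : Finset α) (w : List α → M) : listSum E 0 w = w [] := by
  simp [listSum]

lemma listSum_succ (E : Finset α) (m : ℕ) (w : List α → M) :
    listSum E (m + 1) w = ∑ e ∈ E, listSum E m fun l ↦ w (e :: l) := by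
  simp only [listSum, ← sum_product']
  refine (sum_bij' (fun p _ ↦ Fin.cons p.1 p.2) (fun f _ ↦ (f 0, Fin.tail f)) ?_ ?_ ?_ ?_ ?_).symm
  · simp [Fin.forall_fin_succ]
  · simp +contextual [Fin.tail]
  · simp
  · simp
  · simp [List.ofFn_succ]

lemma listSum_congr {w w' : List α → M} (h : ∀ l, (∀ e ∈ l, e ∈ E) → w l = w' l) :
    listSum E m w = listSum E m w' :=
  sum_congr rfl fun f hf ↦ h _ <| by simpa [List.forall_mem_ofFn_iff] using hf

lemma listSum_eq_zero {w : List α → M} (h : ∀ l, (∀ e ∈ l, e ∈ E) → w l = 0) :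
    listSum E m w = 0 :=
  sum_eq_zero fun f hf ↦ h _ <| by simpa [List.forall_mem_ofFn_iff] using hf

lemma listSum_add (E : Finset α) (m : ℕ) (w w' : List α → M) :
    listSum E m (fun l ↦ w l + w' l) = listSum E m w + listSum E m w' :=
  sum_add_distrib

lemma listSum_sum (S : Finset κ) (E : Finset α) (m : ℕ) (w : κ → List α → M) :
    listSum E m (fun l ↦ ∑ k ∈ S, w k l) = ∑ k ∈ S, listSum E m (w k) :=
  sum_comm

lemma listSum_subset (hE : E' ⊆ E) {w : List α → M}
    (h : ∀ l, (∀ e ∈ l, e ∈ E) → (∃ e ∈ l, e ∉ E') → w l = 0) :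
    listSum E m w = listSum E' m w :=
  (sum_subset (Fintype.piFinset_subset _ _ fun _ ↦ hE) fun f hf hf' ↦ h _
    (by simpa [List.forall_mem_ofFn_iff] using hf)
    (by simpa [List.mem_ofFn, Fintype.mem_piFinset] using hf')).symm

end AddCommMonoid

lemma listSum_union_filter_mul_filter [CommSemiring R] [DecidableEq α] {E₁ E₂ : Finset α}
    (hd : Disjoint E₁ E₂) (m : ℕ) (w₁ w₂ : List α → R) :
    listSum (E₁ ∪ E₂) m (fun l ↦ w₁ (l.filter (· ∈ E₁)) * w₂ (l.filter (· ∈ E₂))) =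
      ∑ p ∈ antidiagonal m, (m.choose p.1 : R) * (listSum E₁ p.1 w₁ * listSum E₂ p.2 w₂) := by
  induction m generalizing w₁ w₂ with
  | zero => simp [listSum_zero]
  | succ m ih =>
    rw [sum_antidiagonal_choose_succ_mul fun i j ↦ listSum E₁ i w₁ * listSum E₂ j w₂,
      listSum_succ, sum_union hd, add_comm]
    have head_mem₁ : ∀ e ∈ E₁, listSum (E₁ ∪ E₂) m (fun l ↦
        w₁ ((e :: l).filter (· ∈ E₁)) * w₂ ((e :: l).filter (· ∈ E₂))) =
        ∑ p ∈ antidiagonal m,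
          (m.choose p.1 : R) * (listSum E₁ p.1 (fun l ↦ w₁ (e :: l)) * listSum E₂ p.2 w₂) :=
      fun e he ↦ by simp [← ih, he, disjoint_left.1 hd he]
    have head_mem₂ : ∀ e ∈ E₂, listSum (E₁ ∪ E₂) m (fun l ↦
        w₁ ((e :: l).filter (· ∈ E₁)) * w₂ ((e :: l).filter (· ∈ E₂))) =
        ∑ p ∈ antidiagonal m,
          (m.choose p.1 : R) * (listSum E₁ p.1 w₁ * listSum E₂ p.2 fun l ↦ w₂ (e :: l)) :=
      fun e he ↦ by simp [← ih, he, disjoint_right.1 hd he]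
    congr 1
    · rw [sum_congr rfl head_mem₂, sum_comm]
      simp only [listSum_succ, mul_sum]
    · rw [sum_congr rfl head_mem₁, sum_comm]
      refine sum_congr rfl fun p hp ↦ ?_
      rw [← Nat.choose_symm_of_eq_add (mem_antidiagonal.1 hp).symm]
      simp only [listSum_succ, mul_sum, sum_mul]

end ListSum

open Classical in
/-- The Iverson bracket of a proposition, with values in `ℚ`. -/
noncomputable def iverson (P : Prop) : ℚ := if P then 1 else 0

lemma iverson_of_true {P : Prop} (h : P) : iverson P = 1 := if_pos h

lemma iverson_of_false {P : Prop} (h : ¬P) : iverson P = 0 := if_neg h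

lemma iverson_congr {P Q : Prop} (h : P ↔ Q) : iverson P = iverson Q := by rw [h]

lemma iverson_and (P Q : Prop) : iverson (P ∧ Q) = iverson P * iverson Q := by
  by_cases hP : P <;> by_cases hQ : Q <;> simp [iverson, hP, hQ]

lemma natCard_tuples_eq_listSum {α : Type*} (E : Finset α) (m : ℕ) (P : List α → Prop) :
    (Nat.card {f : Fin m → α // (∀ i, f i ∈ E) ∧ P (List.ofFn f)} : ℚ) =
      listSum E m fun l ↦ iverson (P l) := by
  classical
  simp only [listSum, iverson, sum_boole]
  rw [Nat.subtype_card]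
  simp [Fintype.mem_piFinset]

/-! ### Connected lists of transpositions -/

section Connectivity

variable {V : Type*} {A B C : Finset V} {τ : Perm V} {l : List (Perm V)} {u v : V}

/-- The set `B` is mapped into itself by every permutation in `l`. -/
def Stabilizes (l : List (Perm V)) (B : Finset V) : Prop :=
  ∀ τ ∈ l, ∀ x ∈ B, τ x ∈ B

/-- The set `A` is nonempty and cannot be split by `l`: when `l` stabilizes `A`, this says that the
group generated by `l` acts transitively on `A`. -/
def Connects (l : List (Perm V)) (A : Finset V) : Prop :=
  A.Nonempty ∧ ∀ B ⊆ A, B.Nonempty → Stabilizes l B → B = A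

lemma connects_nil : Connects [] A ↔ #A = 1 := by
  refine ⟨fun ⟨⟨x, hx⟩, h⟩ ↦ ?_, fun h ↦ ?_⟩
  · rw [← h {x} (by simpa) (by simp) (by simp [Stabilizes]), card_singleton]
  · obtain ⟨x, rfl⟩ := card_eq_one.1 h
    exact ⟨singleton_nonempty x, fun B hB hne _ ↦
      (subset_singleton_iff.1 hB).resolve_left hne.ne_empty⟩

lemma stabilizes_cons : Stabilizes (τ :: l) B ↔ (∀ x ∈ B, τ x ∈ B) ∧ Stabilizes l B := by
  simp [Stabilizes]

lemma Stabilizes.prod_apply_mem (h : Stabilizes l B) : ∀ x ∈ B, l.prod x ∈ B := by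
  induction l with
  | nil => simp
  | cons τ l ih =>
    intro x hx
    rw [stabilizes_cons] at h
    exact h.1 _ (ih h.2 x hx)

lemma apply_mem_iff_of_forall_apply_mem (h : ∀ x ∈ B, τ x ∈ B) (x : V) : τ x ∈ B ↔ x ∈ B :=
  ⟨fun hx ↦ by simpa using Perm.perm_symm_on_of_perm_on_finset h hx, h x⟩

section DecidableEq

variable [DecidableEq V]

lemma forall_swap_apply_mem_iff : (∀ x ∈ B, swap u v x ∈ B) ↔ (u ∈ B ↔ v ∈ B) := by
  refine ⟨fun h ↦ ⟨fun hu ↦ by simpa using h u hu, fun hv ↦ by simpa using h v hv⟩,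
    fun h x hx ↦ ?_⟩
  rw [swap_apply_def]
  split_ifs with hxu hxv
  · exact h.1 (hxu ▸ hx)
  · exact h.2 (hxv ▸ hx)
  · exact hx

lemma stabilizes_swap_cons :
    Stabilizes (swap u v :: l) B ↔ (u ∈ B ↔ v ∈ B) ∧ Stabilizes l B := by
  rw [stabilizes_cons, forall_swap_apply_mem_iff]

lemma Stabilizes.inter (hA : Stabilizes l A) (hB : Stabilizes l B) : Stabilizes l (A ∩ B) := by
  intro τ hτ x hx
  rw [mem_inter] at hx ⊢
  exact hx.imp (hA τ hτ x) (hB τ hτ x)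

lemma Stabilizes.union (hA : Stabilizes l A) (hB : Stabilizes l B) : Stabilizes l (A ∪ B) := by
  intro τ hτ x hx
  rw [mem_union] at hx ⊢
  exact hx.imp (hA τ hτ x) (hB τ hτ x)

lemma Stabilizes.sdiff (hA : Stabilizes l A) (hB : Stabilizes l B) : Stabilizes l (A \ B) := by
  intro τ hτ x hx
  rw [mem_sdiff] at hx ⊢
  exact hx.imp (hA τ hτ x) (mt (apply_mem_iff_of_forall_apply_mem (hB τ hτ) x).1)

end DecidableEq

lemma Connects.subset_of_stabilizes (h : Connects l A) (hA : Stabilizes l A)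
    (hB : Stabilizes l B) {x : V} (hxA : x ∈ A) (hxB : x ∈ B) : A ⊆ B := by
  classical
  exact inter_eq_left.1 <|
    h.2 (A ∩ B) inter_subset_left ⟨x, mem_inter.2 ⟨hxA, hxB⟩⟩ (hA.inter hB)

lemma exists_subset_stabilizes_connects (hA : Stabilizes l A) (hu : u ∈ A) :
    ∃ C ⊆ A, u ∈ C ∧ Stabilizes l C ∧ Connects l C := by
  classical
  obtain ⟨C, ⟨hCA, huC, hC⟩, hmin⟩ := exists_minimal_of_wellFoundedLT
    (fun C ↦ C ⊆ A ∧ u ∈ C ∧ Stabilizes l C) ⟨A, Subset.rfl, hu, hA⟩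
  refine ⟨C, hCA, huC, hC, ⟨u, huC⟩, fun D hDC hne hD ↦ ?_⟩
  by_cases huD : u ∈ D
  · exact hDC.antisymm (hmin ⟨hDC.trans hCA, huD, hD⟩ hDC)
  · have hsub : C ⊆ C \ D := hmin
      ⟨sdiff_subset.trans hCA, mem_sdiff.2 ⟨huC, huD⟩, hC.sdiff hD⟩ sdiff_subset
    obtain ⟨y, hy⟩ := hne
    exact absurd hy (mem_sdiff.1 (hsub (hDC hy))).2

variable [DecidableEq V]

lemma connects_swap_cons_iff_of_mem (hC : Stabilizes l C) (hC' : Connects l C) (hu : u ∈ C)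
    (hv : v ∈ C) : Connects (swap u v :: l) A ↔ Connects l A := by
  refine and_congr_right fun _ ↦ forall₃_congr fun B _ _ ↦ ?_
  have huv (hB : Stabilizes l B) : u ∈ B ↔ v ∈ B :=
    ⟨fun h ↦ hC'.subset_of_stabilizes hC hB hu h hv, fun h ↦ hC'.subset_of_stabilizes hC hB hv h hu⟩
  rw [stabilizes_swap_cons]
  tauto

lemma Connects.of_swap_cons (h : Connects (swap u v :: l) A) (hCA : C ⊆ A) (hC : Stabilizes l C)
    (hu : u ∈ C) (hv : v ∈ A \ C) : Connects l (A \ C) := by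
  refine ⟨⟨v, hv⟩, fun D hD hne hcl ↦ ?_⟩
  have hDA : D ⊆ A := hD.trans sdiff_subset
  have huD : u ∉ D := fun h ↦ (mem_sdiff.1 (hD h)).2 hu
  by_cases hvD : v ∈ D
  · have hCD := h.2 (C ∪ D) (union_subset hCA hDA) ⟨u, mem_union_left _ hu⟩
      (stabilizes_swap_cons.2 ⟨by simp [hu, hvD], hC.union hcl⟩)
    rw [← hCD, union_sdiff_cancel_left (disjoint_sdiff.mono_right hD)]
  · exact absurd (hCA hu) (h.2 D hDA hne (stabilizes_swap_cons.2 ⟨by simp [huD, hvD], hcl⟩) ▸ huD)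

lemma Connects.swap_cons (hA : Stabilizes l A) (hCA : C ⊆ A) (hC : Stabilizes l C)
    (hC' : Connects l C) (hAC : Connects l (A \ C)) (hu : u ∈ C) (hv : v ∈ A \ C) :
    Connects (swap u v :: l) A := by
  refine ⟨⟨u, hCA hu⟩, fun B hB ⟨y, hy⟩ hcl ↦ hB.antisymm ?_⟩
  obtain ⟨huv, hcl⟩ := stabilizes_swap_cons.1 hcl
  have hC_sub {x : V} (hx : x ∈ C) (hxB : x ∈ B) : C ⊆ B := hC'.subset_of_stabilizes hC hcl hx hxB
  have hAC_sub {x : V} (hx : x ∈ A \ C) (hxB : x ∈ B) : A \ C ⊆ B :=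
    hAC.subset_of_stabilizes (hA.sdiff hC) hcl hx hxB
  have huB : u ∈ B := by
    by_cases hyC : y ∈ C
    · exact hC_sub hyC hy hu
    · exact huv.2 (hAC_sub (mem_sdiff.2 ⟨hB hy, hyC⟩) hy hv)
  rw [← union_sdiff_of_subset hCA]
  exact union_subset (hC_sub hu huB) (hAC_sub hv (huv.1 huB))

/-- At most one `B` contributes: the component of `u`, when `v` lies outside it. -/
lemma iverson_connects_swap_cons (hA : Stabilizes l A) (hu : u ∈ A) (hv : v ∈ A) :
    iverson (Connects (swap u v :: l) A) =
      iverson (Connects l A) + ∑ B ∈ A.powerset with u ∈ B ∧ v ∉ B,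
        iverson (Stabilizes l B ∧ Connects l B ∧ Connects l (A \ B)) := by
  obtain ⟨C, hCA, huC, hC, hC'⟩ := exists_subset_stabilizes_connects hA hu
  by_cases hvC : v ∈ C
  · rw [iverson_congr (connects_swap_cons_iff_of_mem hC hC' huC hvC), left_eq_add]
    refine sum_eq_zero fun B hB ↦ iverson_of_false fun h ↦ ?_
    obtain ⟨-, huB, hvB⟩ := mem_filter.1 hB
    exact hvB (hC'.subset_of_stabilizes hC h.1 huC huB hvC)
  · have hA' : ¬Connects l A := fun h ↦ hvC (h.subset_of_stabilizes hA hC hu huC hv)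
    have hvAC : v ∈ A \ C := mem_sdiff.2 ⟨hv, hvC⟩
    rw [iverson_of_false hA', zero_add, sum_eq_single_of_mem C (by simp [hCA, huC, hvC])]
    · exact iverson_congr ⟨fun h ↦ ⟨hC, hC', h.of_swap_cons hCA hC huC hvAC⟩,
        fun h ↦ .swap_cons hA hCA hC hC' h.2.2 huC hvAC⟩
    · refine fun B hB hne ↦ iverson_of_false fun h ↦ hne ?_
      obtain ⟨-, huB, -⟩ := mem_filter.1 hB
      exact (h.2.1.subset_of_stabilizes h.1 hC huB huC).antisymm
        (hC'.subset_of_stabilizes hC h.1 huC huB)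

end Connectivity

section FactorizationCount

variable {V : Type*} [Fintype V] [DecidableEq V] {A B C : Finset V} {τ : Perm V}
  {l : List (Perm V)}

/-- The transpositions of two points of `A`. -/
def swapsIn (A : Finset V) : Finset (Perm V) :=
  A.offDiag.image fun p ↦ swap p.1 p.2

/-- The number of `m`-tuples of transpositions of points of `A` which act transitively on `A` and
whose product agrees with `π` on `A`. -/
noncomputable def factorizationCount (A : Finset V) (π : Perm V) (m : ℕ) : ℚ :=
  listSum (swapsIn A) m fun l ↦ iverson (Connects l A ∧ ∀ x ∈ A, l.prod x = π x)

lemma mem_swapsIn : τ ∈ swapsIn A ↔ ∃ u ∈ A, ∃ v ∈ A, u ≠ v ∧ swap u v = τ := by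
  simp [swapsIn, and_assoc]

lemma swap_mem_swapsIn {u v : V} (huv : u ≠ v) : swap u v ∈ swapsIn A ↔ u ∈ A ∧ v ∈ A := by
  refine ⟨fun h ↦ ?_, fun h ↦ mem_swapsIn.2 ⟨u, h.1, v, h.2, huv, rfl⟩⟩
  obtain ⟨a, ha, b, hb, -, hab⟩ := mem_swapsIn.1 h
  have hmoved {x : V} (hx : swap u v x ≠ x) : x ∈ A := by
    by_contra hxA
    rw [← hab, swap_apply_of_ne_of_ne (ne_of_mem_of_not_mem ha hxA).symm
      (ne_of_mem_of_not_mem hb hxA).symm] at hx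
    exact hx rfl
  exact ⟨hmoved (by simp [huv.symm]), hmoved (by simp [huv])⟩

lemma apply_eq_self_of_mem_swapsIn (h : τ ∈ swapsIn A) {x : V} (hx : x ∉ A) : τ x = x := by
  obtain ⟨u, hu, v, hv, -, rfl⟩ := mem_swapsIn.1 h
  exact swap_apply_of_ne_of_ne (ne_of_mem_of_not_mem hu hx).symm (ne_of_mem_of_not_mem hv hx).symm

lemma apply_mem_of_mem_swapsIn (h : τ ∈ swapsIn A) : ∀ x ∈ A, τ x ∈ A := by
  obtain ⟨u, hu, v, hv, -, rfl⟩ := mem_swapsIn.1 h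
  exact forall_swap_apply_mem_iff.2 (by simp [hu, hv])

lemma stabilizes_of_forall_mem_swapsIn (hl : ∀ τ ∈ l, τ ∈ swapsIn A) : Stabilizes l A :=
  fun τ hτ ↦ apply_mem_of_mem_swapsIn (hl τ hτ)

lemma swapsIn_mono (h : A ⊆ B) : swapsIn A ⊆ swapsIn B :=
  image_subset_image (offDiag_mono h)

lemma disjoint_swapsIn (h : Disjoint B C) : Disjoint (swapsIn B) (swapsIn C) := by
  rw [disjoint_left]
  rintro τ hB hC
  obtain ⟨u, hu, v, -, huv, rfl⟩ := mem_swapsIn.1 hB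
  exact disjoint_left.1 h hu ((swap_mem_swapsIn huv).1 hC).1

lemma mem_swapsIn_union_of_apply_mem (h : τ ∈ swapsIn A) (hB : ∀ x ∈ B, τ x ∈ B) :
    τ ∈ swapsIn B ∪ swapsIn (A \ B) := by
  obtain ⟨u, hu, v, hv, huv, rfl⟩ := mem_swapsIn.1 h
  rw [forall_swap_apply_mem_iff] at hB
  rw [mem_union, swap_mem_swapsIn huv, swap_mem_swapsIn huv, mem_sdiff, mem_sdiff]
  tauto

lemma apply_eq_self_of_notMem_swapsIn (hBC : Disjoint B C) (hl : ∀ τ ∈ l, τ ∈ swapsIn B ∪ swapsIn C)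
    (hτ : τ ∈ l) (hτB : τ ∉ swapsIn B) : ∀ x ∈ B, τ x = x :=
  fun _ hx ↦ apply_eq_self_of_mem_swapsIn ((mem_union.1 (hl τ hτ)).resolve_left hτB)
    (disjoint_left.1 hBC hx)

lemma stabilizes_filter_swapsIn (hBC : Disjoint B C) (hl : ∀ τ ∈ l, τ ∈ swapsIn B ∪ swapsIn C)
    {D : Finset V} (hD : D ⊆ B) :
    Stabilizes (l.filter (· ∈ swapsIn B)) D ↔ Stabilizes l D := by
  refine ⟨fun h τ hτ x hx ↦ ?_, fun h τ hτ ↦ h τ (List.mem_filter.1 hτ).1⟩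
  by_cases hτB : τ ∈ swapsIn B
  · exact h τ (List.mem_filter.2 ⟨hτ, by simpa using hτB⟩) x hx
  · rwa [apply_eq_self_of_notMem_swapsIn hBC hl hτ hτB x (hD hx)]

lemma stabilizes_of_disjoint (hBC : Disjoint B C) (hl : ∀ τ ∈ l, τ ∈ swapsIn B ∪ swapsIn C) :
    Stabilizes l B :=
  (stabilizes_filter_swapsIn hBC hl Subset.rfl).1 <|
    stabilizes_of_forall_mem_swapsIn fun _ hτ ↦ by simpa using (List.mem_filter.1 hτ).2

lemma connects_filter_swapsIn (hBC : Disjoint B C) (hl : ∀ τ ∈ l, τ ∈ swapsIn B ∪ swapsIn C) :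
    Connects (l.filter (· ∈ swapsIn B)) B ↔ Connects l B :=
  and_congr_right fun _ ↦ forall₃_congr fun _ hD _ ↦ by rw [stabilizes_filter_swapsIn hBC hl hD]

lemma prod_filter_swapsIn_apply (hBC : Disjoint B C) (hl : ∀ τ ∈ l, τ ∈ swapsIn B ∪ swapsIn C) :
    ∀ x ∈ B, (l.filter (· ∈ swapsIn B)).prod x = l.prod x := by
  induction l with
  | nil => simp
  | cons τ l ih =>
    intro x hx
    have hl' : ∀ τ ∈ l, τ ∈ swapsIn B ∪ swapsIn C := fun τ hτ ↦ hl τ (List.mem_cons_of_mem _ hτ)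
    by_cases hτB : τ ∈ swapsIn B
    · rw [List.filter_cons_of_pos (by simpa using hτB), List.prod_cons, List.prod_cons,
        Perm.mul_apply, Perm.mul_apply, ih hl' x hx]
    · rw [List.filter_cons_of_neg (by simpa using hτB), ih hl' x hx, List.prod_cons,
        Perm.mul_apply, apply_eq_self_of_notMem_swapsIn hBC hl List.mem_cons_self hτB _
          ((stabilizes_of_disjoint hBC hl').prod_apply_mem x hx)]

/-- The number of `m`-tuples of transpositions which act transitively on each of the two parts `B`
and `A \ B` of `A` and whose product agrees with `ρ` on `A`, shuffled from factorizations on the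
two parts. -/
noncomputable def splitCount (A B : Finset V) (ρ : Perm V) (m : ℕ) : ℚ :=
  ∑ p ∈ antidiagonal m, (m.choose p.1 : ℚ) *
    (factorizationCount B ρ p.1 * factorizationCount (A \ B) ρ p.2)

lemma listSum_stabilizes_connects (hB : B ⊆ A) (ρ : Perm V) (m : ℕ) :
    listSum (swapsIn A) m (fun l ↦ iverson
      ((Stabilizes l B ∧ Connects l B ∧ Connects l (A \ B)) ∧ ∀ x ∈ A, l.prod x = ρ x)) =
      splitCount A B ρ m := by
  have hd : Disjoint B (A \ B) := disjoint_sdiff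
  have hsub : swapsIn B ∪ swapsIn (A \ B) ⊆ swapsIn A :=
    union_subset (swapsIn_mono hB) (swapsIn_mono sdiff_subset)
  rw [listSum_subset hsub]
  · simp only [splitCount, factorizationCount]
    rw [← listSum_union_filter_mul_filter (disjoint_swapsIn hd)]
    refine listSum_congr fun l hl ↦ ?_
    have hl' : ∀ τ ∈ l, τ ∈ swapsIn (A \ B) ∪ swapsIn B := by simpa only [union_comm] using hl
    rw [connects_filter_swapsIn hd hl, connects_filter_swapsIn hd.symm hl', ← iverson_and]
    have hforall : (∀ x ∈ A, l.prod x = ρ x) ↔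
        (∀ x ∈ B, l.prod x = ρ x) ∧ ∀ x ∈ A \ B, l.prod x = ρ x := by
      rw [← forall_mem_union, union_sdiff_of_subset hB]
    have hB_prod : (∀ x ∈ B, (l.filter (· ∈ swapsIn B)).prod x = ρ x) ↔ ∀ x ∈ B, l.prod x = ρ x :=
      forall₂_congr fun x hx ↦ by rw [prod_filter_swapsIn_apply hd hl x hx]
    have hAB_prod : (∀ x ∈ A \ B, (l.filter (· ∈ swapsIn (A \ B))).prod x = ρ x) ↔
        ∀ x ∈ A \ B, l.prod x = ρ x :=
      forall₂_congr fun x hx ↦ by rw [prod_filter_swapsIn_apply hd.symm hl' x hx]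
    rw [hB_prod, hAB_prod, hforall]
    have := stabilizes_of_disjoint hd hl
    exact iverson_congr (by tauto)
  · rintro l hl ⟨τ, hτ, hτ'⟩
    exact iverson_of_false fun h ↦ hτ' (mem_swapsIn_union_of_apply_mem (hl τ hτ) (h.1.1 τ hτ))

lemma listSum_connects_swap_cons {u v : V} (hu : u ∈ A) (hv : v ∈ A) (ρ : Perm V) (m : ℕ) :
    listSum (swapsIn A) m (fun l ↦
      iverson (Connects (swap u v :: l) A ∧ ∀ x ∈ A, l.prod x = ρ x)) =
    factorizationCount A ρ m + ∑ B ∈ A.powerset with u ∈ B ∧ v ∉ B, splitCount A B ρ m := by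
  have hsplit := sum_congr (f := fun B ↦ splitCount A B ρ m) rfl
    fun B (hB : B ∈ {B ∈ A.powerset | u ∈ B ∧ v ∉ B}) ↦
      (listSum_stabilizes_connects (mem_powerset.1 (mem_filter.1 hB).1) ρ m).symm
  rw [hsplit, ← listSum_sum, factorizationCount, ← listSum_add]
  refine listSum_congr fun l hl ↦ ?_
  simp only [iverson_and _ (∀ x ∈ A, l.prod x = ρ x), ← sum_mul, ← add_mul,
    iverson_connects_swap_cons (stabilizes_of_forall_mem_swapsIn hl) hu hv]

lemma sum_swapsIn_eq_sum_offDiag (A : Finset V) (F : Perm V → ℚ) :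
    ∑ τ ∈ swapsIn A, F τ = 1 / 2 * ∑ p ∈ A.offDiag, F (swap p.1 p.2) := by
  rw [← sum_fiberwise_of_maps_to (t := swapsIn A) fun p hp ↦ mem_image_of_mem _ hp, mul_sum]
  refine sum_congr rfl fun τ hτ ↦ ?_
  obtain ⟨u, hu, v, hv, huv, rfl⟩ := mem_swapsIn.1 hτ
  have hfiber : {p ∈ A.offDiag | swap p.1 p.2 = swap u v} = {(u, v), (v, u)} := by
    ext ⟨a, b⟩
    simp only [mem_filter, mem_offDiag, mem_insert, mem_singleton, Prod.mk.injEq]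
    constructor
    · rintro ⟨⟨-, -, hab⟩, h⟩
      have hb : swap u v a = b := by rw [← h, swap_apply_left]
      rw [swap_apply_def] at hb
      grind
    · rintro (⟨rfl, rfl⟩ | ⟨rfl, rfl⟩)
      exacts [⟨⟨hu, hv, huv⟩, rfl⟩, ⟨⟨hv, hu, huv.symm⟩, swap_comm _ _⟩]
  rw [hfiber, sum_pair (by simp [huv]), swap_comm v u]
  ring

lemma factorizationCount_succ (A : Finset V) (π : Perm V) (m : ℕ) :
    factorizationCount A π (m + 1) = 1 / 2 * ∑ p ∈ A.offDiag,
      (factorizationCount A (swap p.1 p.2 * π) m +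
        ∑ B ∈ A.powerset with p.1 ∈ B ∧ p.2 ∉ B, splitCount A B (swap p.1 p.2 * π) m) := by
  rw [factorizationCount, listSum_succ, sum_swapsIn_eq_sum_offDiag]
  congr 1
  refine sum_congr rfl fun p hp ↦ ?_
  obtain ⟨hp₁, hp₂, -⟩ := mem_offDiag.1 hp
  rw [← listSum_connects_swap_cons hp₁ hp₂]
  refine listSum_congr fun l _ ↦ iverson_congr <| and_congr_right fun _ ↦ forall₂_congr fun x _ ↦ ?_
  rw [List.prod_cons, Perm.mul_apply, Perm.mul_apply, swap_apply_eq_iff]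

lemma apply_mem_of_factorizationCount_ne_zero {ρ : Perm V} {m : ℕ}
    (h : factorizationCount B ρ m ≠ 0) : ∀ x ∈ B, ρ x ∈ B := by
  intro x hx
  by_contra hxB
  refine h (listSum_eq_zero fun l hl ↦ iverson_of_false fun hl' ↦ hxB ?_)
  rw [← hl'.2 x hx]
  exact (stabilizes_of_forall_mem_swapsIn hl).prod_apply_mem x hx

lemma apply_mem_of_splitCount_ne_zero {ρ : Perm V} {m : ℕ} (h : splitCount A B ρ m ≠ 0) :
    ∀ x ∈ B, ρ x ∈ B := by
  obtain ⟨p, -, hp⟩ := exists_ne_zero_of_sum_ne_zero h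
  exact apply_mem_of_factorizationCount_ne_zero (left_ne_zero_of_mul (right_ne_zero_of_mul hp))

end FactorizationCount

/-! ### Joining and cutting cycles -/

section Cycles

variable {V : Type*} {π : Perm V} {B c d : Finset V} {u v : V}

lemma isCycleOn_of_forall_sameCycle (h : ∀ x ∈ c, π x ∈ c) (hu : ∀ x ∈ c, π.SameCycle u x) :
    π.IsCycleOn c := by
  refine ⟨⟨fun x hx ↦ h x hx, π.injective.injOn, fun y hy ↦ ?_⟩,
    fun x hx y hy ↦ (hu x hx).symm.trans (hu y hy)⟩
  exact ⟨π.symm y, Perm.perm_symm_on_of_perm_on_finset h hy, by simp⟩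

lemma pow_apply_mem_of_forall_apply_mem (h : ∀ x ∈ c, π x ∈ c) (i : ℕ) : ∀ x ∈ c, (π ^ i) x ∈ c :=
  (show Set.MapsTo π c c from h).perm_pow i

lemma sameCycle_pow_apply (π : Perm V) (u : V) (i : ℕ) : π.SameCycle u ((π ^ i) u) :=
  ⟨i, by simp⟩

lemma pow_apply_ne_self_of_lt_card (h : π.IsCycleOn c) (hu : u ∈ c) {j : ℕ} (h0 : 0 < j)
    (hj : j < #c) : (π ^ j) u ≠ u := fun hju ↦
  absurd (Nat.le_of_dvd h0 ((h.pow_apply_eq hu).1 hju)) (by lia)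

lemma pow_apply_injOn_range (h : π.IsCycleOn c) (hu : u ∈ c) :
    Set.InjOn (fun i ↦ (π ^ i) u) (range #c) := fun _ hi _ hj hij ↦
  ((h.pow_apply_eq_pow_apply hu).1 hij).eq_of_lt_of_lt (mem_range.1 hi) (mem_range.1 hj)

lemma subset_of_isCycleOn (hc : π.IsCycleOn c) (hB : ∀ x ∈ B, π x ∈ B) {x : V} (hxc : x ∈ c)
    (hxB : x ∈ B) : c ⊆ B := by
  intro y hy
  obtain ⟨i, -, rfl⟩ := hc.exists_pow_eq hxc hy
  exact pow_apply_mem_of_forall_apply_mem hB i x hxB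

variable [DecidableEq V]

lemma swap_mul_pow_apply {w : V} {i : ℕ}
    (h : ∀ j, 0 < j → j ≤ i → (π ^ j) w ≠ u ∧ (π ^ j) w ≠ v) :
    ((swap u v * π) ^ i) w = (π ^ i) w := by
  induction i with
  | zero => simp
  | succ i ih =>
    rw [pow_succ', Perm.mul_apply, ih fun j h0 hj ↦ h j h0 (by lia), Perm.mul_apply,
      ← Perm.mul_apply π, ← pow_succ']
    exact swap_apply_of_ne_of_ne (h (i + 1) (by lia) le_rfl).1 (h (i + 1) (by lia) le_rfl).2

lemma isCycleOn_swap_mul_of_notMem (h : π.IsCycleOn c) (hu : u ∉ c) (hv : v ∉ c) :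
    (swap u v * π).IsCycleOn c := by
  have hmem (i : ℕ) {x : V} (hx : x ∈ c) : (π ^ i) x ∈ c :=
    pow_apply_mem_of_forall_apply_mem (fun _ hx ↦ h.1.mapsTo hx) i x hx
  have hne {x : V} (hx : x ∈ c) : x ≠ u ∧ x ≠ v := ⟨ne_of_mem_of_not_mem hx hu,
    ne_of_mem_of_not_mem hx hv⟩
  rcases c.eq_empty_or_nonempty with rfl | ⟨w, hw⟩
  · simp [Perm.IsCycleOn]
  refine isCycleOn_of_forall_sameCycle (u := w) (fun x hx ↦ ?_) (fun x hx ↦ ?_)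
  · have hπx : π x ∈ c := h.1.mapsTo hx
    rwa [Perm.mul_apply, swap_apply_of_ne_of_ne (hne hπx).1 (hne hπx).2]
  · obtain ⟨i, -, rfl⟩ := h.exists_pow_eq hw hx
    rw [← swap_mul_pow_apply fun j _ _ ↦ hne (hmem j hw)]
    exact sameCycle_pow_apply _ _ _

/-- Following `swap u v * π` from `u`, one traverses the whole `π`-cycle of `u` before jumping
to `v`. -/
lemma sameCycle_swap_mul (h : π.IsCycleOn c) (hu : u ∈ c) (hv : v ∉ c) :
    (swap u v * π).SameCycle u v ∧ ∀ x ∈ c, (swap u v * π).SameCycle u x := by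
  have hmem := pow_apply_mem_of_forall_apply_mem fun _ hx ↦ h.1.mapsTo hx
  have hpow : ∀ i < #c, ((swap u v * π) ^ i) u = (π ^ i) u := fun i hi ↦
    swap_mul_pow_apply fun j h0 hj ↦ ⟨pow_apply_ne_self_of_lt_card h hu h0 (by lia),
      ne_of_mem_of_not_mem (hmem j u hu) hv⟩
  constructor
  · have hcard : ((swap u v * π) ^ #c) u = v := by
      obtain ⟨k, hk⟩ : ∃ k, #c = k + 1 := Nat.exists_eq_add_one.2 (card_pos.2 ⟨u, hu⟩)
      rw [hk, pow_succ', Perm.mul_apply, hpow k (by lia), Perm.mul_apply, ← Perm.mul_apply π,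
        ← pow_succ', ← hk, h.pow_card_apply hu, swap_apply_left]
    simpa only [hcard] using sameCycle_pow_apply (swap u v * π) u #c
  · intro x hx
    obtain ⟨i, hi, rfl⟩ := h.exists_pow_eq hu hx
    rw [← hpow i hi]
    exact sameCycle_pow_apply _ _ _

lemma isCycleOn_union_swap_mul (hc : π.IsCycleOn c) (hd : π.IsCycleOn d) (hcd : Disjoint c d)
    (hu : u ∈ c) (hv : v ∈ d) : (swap u v * π).IsCycleOn (c ∪ d : Finset V) := by
  obtain ⟨huv, hu_same⟩ := sameCycle_swap_mul hc hu (disjoint_right.1 hcd hv)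
  obtain ⟨-, hv_same⟩ := sameCycle_swap_mul hd hv (disjoint_left.1 hcd hu)
  rw [swap_comm v u] at hv_same
  refine isCycleOn_of_forall_sameCycle (u := u) (fun x hx ↦ ?_) (fun x hx ↦ ?_)
  · refine forall_swap_apply_mem_iff.2 (by simp [hu, hv]) _ ?_
    exact mem_union.2 ((mem_union.1 hx).imp (fun h ↦ hc.1.mapsTo h) fun h ↦ hd.1.mapsTo h)
  · exact (mem_union.1 hx).elim (hu_same x) fun hx ↦ huv.trans (hv_same x hx)

/-- The first `a` points of the orbit of `u` under `π`. -/
def arc (π : Perm V) (u : V) (a : ℕ) : Finset V :=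
  (range a).image fun i ↦ (π ^ i) u

lemma mem_arc_self {a : ℕ} (ha : 0 < a) : u ∈ arc π u a :=
  mem_image.2 ⟨0, mem_range.2 ha, by simp⟩

lemma arc_subset (h : π.IsCycleOn c) (hu : u ∈ c) (a : ℕ) : arc π u a ⊆ c :=
  image_subset_iff.2 fun i _ ↦
    pow_apply_mem_of_forall_apply_mem (fun _ hx ↦ h.1.mapsTo hx) i u hu

lemma card_arc (h : π.IsCycleOn c) (hu : u ∈ c) {a : ℕ} (ha : a ≤ #c) : #(arc π u a) = a := by
  rw [arc, card_image_of_injOn ((pow_apply_injOn_range h hu).mono (by simpa using ha)), card_range]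

lemma disjoint_arc (h : π.IsCycleOn c) (hu : u ∈ c) {a : ℕ} (ha : a ≤ #c) :
    Disjoint (arc π u a) (arc π ((π ^ a) u) (#c - a)) := by
  simp only [arc, disjoint_left, mem_image, mem_range]
  rintro _ ⟨i, hi, rfl⟩ ⟨j, hj, hij⟩
  rw [← Perm.mul_apply, ← pow_add] at hij
  have := pow_apply_injOn_range h hu (by simp; lia) (by simp; lia) hij
  lia

lemma arc_union_arc (h : π.IsCycleOn c) (hu : u ∈ c) {a : ℕ} (ha : a ≤ #c) :
    arc π u a ∪ arc π ((π ^ a) u) (#c - a) = c := by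
  have hv : (π ^ a) u ∈ c :=
    pow_apply_mem_of_forall_apply_mem (fun _ hx ↦ h.1.mapsTo hx) a u hu
  refine eq_of_subset_of_card_le (union_subset (arc_subset h hu _) (arc_subset h hv _)) ?_
  rw [card_union_of_disjoint (disjoint_arc h hu ha), card_arc h hu ha, card_arc h hv (by lia)]
  lia

lemma isCycleOn_arc_swap_mul (h : π.IsCycleOn c) (hu : u ∈ c) {a : ℕ} (h0 : 0 < a) (ha : a < #c) :
    (swap u ((π ^ a) u) * π).IsCycleOn (arc π u a) := by
  have hpow : ∀ i < a, ((swap u ((π ^ a) u) * π) ^ i) u = (π ^ i) u := fun i hi ↦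
    swap_mul_pow_apply fun j h0 hj ↦ ⟨pow_apply_ne_self_of_lt_card h hu h0 (by lia), fun hja ↦ by
      have := pow_apply_injOn_range h hu (by simp; lia) (by simpa using ha) hja
      lia⟩
  have hclose : ((swap u ((π ^ a) u) * π) ^ a) u = u := by
    obtain ⟨k, rfl⟩ := Nat.exists_eq_add_one.2 h0
    rw [pow_succ' (swap _ _ * π), Perm.mul_apply, hpow k (by lia), Perm.mul_apply,
      ← Perm.mul_apply π, ← pow_succ', swap_apply_right]
  refine isCycleOn_of_forall_sameCycle (u := u) (fun x hx ↦ ?_) (fun x hx ↦ ?_)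
  · obtain ⟨i, hi, rfl⟩ := mem_image.1 hx
    rw [mem_range] at hi
    rw [← hpow i hi, ← Perm.mul_apply, ← pow_succ']
    rcases (Nat.succ_le_of_lt hi).eq_or_lt with hia | hia
    · rw [← Nat.succ_eq_add_one, hia, hclose]
      exact mem_arc_self h0
    · rw [hpow _ hia]
      exact mem_image_of_mem _ (mem_range.2 hia)
  · obtain ⟨i, hi, rfl⟩ := mem_image.1 hx
    rw [← hpow i (mem_range.1 hi)]
    exact sameCycle_pow_apply _ _ _

end Cycles

section CyclePartition

variable {V : Type*} [DecidableEq V] {π : Perm V} {A B c d : Finset V} {C S : Finset (Finset V)}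
  {u v : V}

/-- `C` is the set of cycles of `π` on `A`, fixed points included. -/
structure IsCyclePartition (π : Perm V) (A : Finset V) (C : Finset (Finset V)) : Prop where
  nonempty : ∀ c ∈ C, c.Nonempty
  isCycleOn : ∀ c ∈ C, π.IsCycleOn c
  pairwiseDisjoint : (C : Set (Finset V)).PairwiseDisjoint id
  biUnion_eq : C.biUnion id = A

namespace IsCyclePartition

lemma mem_iff (h : IsCyclePartition π A C) {x : V} : x ∈ A ↔ ∃ c ∈ C, x ∈ c := by
  simp [← h.biUnion_eq]

lemma apply_mem (h : IsCyclePartition π A C) (hc : c ∈ C) : ∀ x ∈ c, π x ∈ c :=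
  fun _ hx ↦ (h.isCycleOn c hc).1.mapsTo hx

lemma subset (h : IsCyclePartition π A C) (hc : c ∈ C) : c ⊆ A :=
  fun _ hx ↦ h.mem_iff.2 ⟨c, hc, hx⟩

lemma eq_of_mem (h : IsCyclePartition π A C) (hc : c ∈ C) (hd : d ∈ C) {x : V} (hxc : x ∈ c)
    (hxd : x ∈ d) : c = d :=
  h.pairwiseDisjoint.elim_finset hc hd x hxc hxd

lemma card_eq (h : IsCyclePartition π A C) : #A = ∑ c ∈ C, #c := by
  rw [← h.biUnion_eq]
  exact card_biUnion h.pairwiseDisjoint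

lemma mono (h : IsCyclePartition π A C) (hS : S ⊆ C) : IsCyclePartition π (S.biUnion id) S :=
  ⟨fun c hc ↦ h.nonempty c (hS hc), fun c hc ↦ h.isCycleOn c (hS hc),
    h.pairwiseDisjoint.subset (coe_subset.2 hS), rfl⟩

lemma insert (h : IsCyclePartition π A C) (hc : c.Nonempty) (hπ : π.IsCycleOn c)
    (hcA : Disjoint c A) : IsCyclePartition π (c ∪ A) (insert c C) where
  nonempty := by simpa [hc] using h.nonempty
  isCycleOn := by simpa [hπ] using h.isCycleOn
  pairwiseDisjoint := by
    rw [coe_insert]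
    exact h.pairwiseDisjoint.insert fun d hd _ ↦ hcA.mono_right (h.subset hd)
  biUnion_eq := by simp [h.biUnion_eq]

lemma notMem_of_disjoint (h : IsCyclePartition π A C) (hc : c.Nonempty) (hcA : Disjoint c A) :
    c ∉ C := fun hcC ↦ by
  obtain ⟨x, hx⟩ := hc
  exact disjoint_left.1 hcA hx (h.subset hcC hx)

lemma subset_biUnion_iff (h : IsCyclePartition π A C) (hS : S ⊆ C) (hc : c ∈ C) :
    c ⊆ S.biUnion id ↔ c ∈ S := by
  refine ⟨fun hsub ↦ ?_, fun hcS ↦ subset_biUnion_of_mem id hcS⟩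
  obtain ⟨x, hx⟩ := h.nonempty c hc
  obtain ⟨d, hd, hxd⟩ := mem_biUnion.1 (hsub hx)
  rwa [h.eq_of_mem hc (hS hd) hx hxd]

lemma sdiff_biUnion (h : IsCyclePartition π A C) (hS : S ⊆ C) :
    A \ S.biUnion id = (C \ S).biUnion id := by
  ext x
  simp only [mem_sdiff, h.mem_iff, mem_biUnion, id]
  constructor
  · rintro ⟨⟨c, hc, hx⟩, hxS⟩
    exact ⟨c, ⟨hc, fun hcS ↦ hxS ⟨c, hcS, hx⟩⟩, hx⟩
  · rintro ⟨c, ⟨hc, hcS⟩, hx⟩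
    refine ⟨⟨c, hc, hx⟩, fun ⟨d, hd, hxd⟩ ↦ hcS ?_⟩
    rwa [h.eq_of_mem hc (hS hd) hx hxd]

lemma biUnion_filter_subset (h : IsCyclePartition π A C) (hB : B ⊆ A) (hπ : ∀ x ∈ B, π x ∈ B) :
    {c ∈ C | c ⊆ B}.biUnion id = B := by
  refine Subset.antisymm (biUnion_subset.2 fun c hc ↦ (mem_filter.1 hc).2) fun x hx ↦ ?_
  obtain ⟨c, hc, hxc⟩ := h.mem_iff.1 (hB hx)
  exact mem_biUnion.2 ⟨c, mem_filter.2 ⟨hc, subset_of_isCycleOn (h.isCycleOn c hc) hπ hxc hx⟩, hxc⟩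

lemma erase (h : IsCyclePartition π A C) (hc : c ∈ C) : IsCyclePartition π (A \ c) (C.erase c) := by
  have := h.mono (sdiff_subset (s := C) (t := {c}))
  rwa [← h.sdiff_biUnion (singleton_subset_iff.2 hc), singleton_biUnion, id,
    sdiff_singleton_eq_erase] at this

lemma swap_mul_of_notMem (h : IsCyclePartition π A C) (hu : u ∉ A) (hv : v ∉ A) :
    IsCyclePartition (swap u v * π) A C where
  __ := h
  isCycleOn c hc := isCycleOn_swap_mul_of_notMem (h.isCycleOn c hc) (fun hx ↦ hu (h.subset hc hx))
    fun hx ↦ hv (h.subset hc hx)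

lemma disjoint_union_sdiff (c d : Finset V) : Disjoint (c ∪ d) ((A \ c) \ d) := by
  rw [sdiff_sdiff, sup_eq_union]
  exact disjoint_sdiff

lemma union_notMem (h : IsCyclePartition π A C) (hc : c ∈ C) (hd : d ∈ C.erase c) :
    c ∪ d ∉ (C.erase c).erase d :=
  ((h.erase hc).erase hd).notMem_of_disjoint ((h.nonempty c hc).mono subset_union_left)
    (disjoint_union_sdiff c d)

lemma join (h : IsCyclePartition π A C) (hc : c ∈ C) (hd : d ∈ C.erase c) (hu : u ∈ c)
    (hv : v ∈ d) :
    IsCyclePartition (swap u v * π) A (Insert.insert (c ∪ d) ((C.erase c).erase d)) := by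
  have hdC := mem_of_mem_erase hd
  have hcd : Disjoint c d := h.pairwiseDisjoint hc hdC (ne_of_mem_erase hd).symm
  have := (((h.erase hc).erase hd).swap_mul_of_notMem (by simp [hu]) (by simp [hv])).insert
    ⟨u, mem_union_left _ hu⟩
    (isCycleOn_union_swap_mul (h.isCycleOn c hc) (h.isCycleOn d hdC) hcd hu hv)
    (disjoint_union_sdiff c d)
  rwa [sdiff_sdiff, sup_eq_union,
    union_sdiff_of_subset (union_subset (h.subset hc) (h.subset hdC))] at this

lemma cut (h : IsCyclePartition π A C) (hc : c ∈ C) (hu : u ∈ c) {a : ℕ} (h0 : 0 < a)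
    (ha : a < #c) (hv : (π ^ a) u = v) :
    ∃ c₁ c₂, u ∈ c₁ ∧ v ∈ c₂ ∧ #c₁ = a ∧ #c₂ = #c - a ∧
      c₁ ∉ Insert.insert c₂ (C.erase c) ∧ c₂ ∉ C.erase c ∧
      IsCyclePartition (swap u v * π) A (Insert.insert c₁ (Insert.insert c₂ (C.erase c))) := by
  have hcyc := h.isCycleOn c hc
  have hvc : v ∈ c := hv ▸ pow_apply_mem_of_forall_apply_mem (h.apply_mem hc) a u hu
  have hvu : (π ^ (#c - a)) v = u := by
    rw [← hv, ← Perm.mul_apply, ← pow_add, Nat.sub_add_cancel ha.le, hcyc.pow_card_apply hu]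
  have hcyc₁ := isCycleOn_arc_swap_mul hcyc hu h0 ha
  have hcyc₂ := isCycleOn_arc_swap_mul hcyc hvc (Nat.sub_pos_of_lt ha) (by lia)
  have hdisj := disjoint_arc hcyc hu ha.le
  have hunion := arc_union_arc hcyc hu ha.le
  rw [hvu, swap_comm] at hcyc₂
  rw [hv] at hcyc₁ hdisj hunion
  have hne₁ : (arc π u a).Nonempty := ⟨u, mem_arc_self h0⟩
  have hne₂ : (arc π v (#c - a)).Nonempty := ⟨v, mem_arc_self (by lia)⟩
  have hrest := (h.erase hc).swap_mul_of_notMem (u := u) (v := v) (by simp [hu]) (by simp [hvc])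
  have hdisj₂ : Disjoint (arc π v (#c - a)) (A \ c) :=
    disjoint_sdiff.mono_left (arc_subset hcyc hvc _)
  have hinsert := hrest.insert hne₂ hcyc₂ hdisj₂
  have hdisj₁ : Disjoint (arc π u a) (arc π v (#c - a) ∪ A \ c) :=
    disjoint_union_right.2 ⟨hdisj, disjoint_sdiff.mono_left (arc_subset hcyc hu _)⟩
  refine ⟨arc π u a, arc π v (#c - a), mem_arc_self h0, mem_arc_self (by lia),
    card_arc hcyc hu ha.le, card_arc hcyc hvc (by lia), hinsert.notMem_of_disjoint hne₁ hdisj₁,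
    hrest.notMem_of_disjoint hne₂ hdisj₂, ?_⟩
  have := hinsert.insert hne₁ hcyc₁ hdisj₁
  rwa [← union_assoc, hunion, union_sdiff_of_subset (h.subset hc)] at this

end IsCyclePartition

end CyclePartition

/-! ### Hurwitz's formula -/

section Convolution

open Nat

/-- The factor `m!` of Hurwitz's formula, set to zero unless the Riemann–Hurwitz relation
`m + 2 = s` for genus zero holds; `s` is the number of points plus the number of cycles. -/
def genusZeroFactor (m s : ℕ) : ℚ := if m + 2 = s then (m ! : ℚ) else 0

lemma sum_antidiagonal_genusZeroFactor {m s t : ℕ} (hs : 2 ≤ s) (ht : 2 ≤ t) (hm : m + 4 ≤ s + t)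
    {f g : ℕ → ℚ} {F G : ℚ} (hf : ∀ i ≤ m, i + 2 ≤ s → f i = genusZeroFactor i s * F)
    (hg : ∀ i ≤ m, i + 2 ≤ t → g i = genusZeroFactor i t * G) :
    ∑ p ∈ antidiagonal m, (m.choose p.1 : ℚ) * (f p.1 * g p.2) =
      genusZeroFactor m (s + t - 2) * (F * G) := by
  have hterm : ∀ p ∈ antidiagonal m, (m.choose p.1 : ℚ) * (f p.1 * g p.2) =
      if p = (s - 2, t - 2) then m ! * (F * G) else 0 := by
    rintro ⟨i, j⟩ hij
    rw [HasAntidiagonal.mem_antidiagonal] at hij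
    simp only [Prod.mk.injEq]
    rcases lt_trichotomy (i + 2) s with hi | rfl | hi
    · rw [hf i (by lia) hi.le, genusZeroFactor, if_neg hi.ne, if_neg (by lia)]
      ring
    · rcases eq_or_ne (j + 2) t with rfl | hj
      · rw [hf i (by lia) le_rfl, hg j (by lia) le_rfl, genusZeroFactor, genusZeroFactor,
          if_pos rfl, if_pos rfl, if_pos (by lia), cast_choose ℚ (by lia),
          show m - i = j by lia]
        field_simp
      · rw [hg j (by lia) (by lia), genusZeroFactor, if_neg hj, if_neg (by lia)]
        ring
    · rw [hg j (by lia) (by lia), genusZeroFactor, if_neg (by lia), if_neg (by lia)]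
      ring
  rw [sum_congr rfl hterm, sum_ite_eq', genusZeroFactor, ite_mul, zero_mul]
  exact if_congr (by rw [HasAntidiagonal.mem_antidiagonal]; lia) rfl rfl

end Convolution

section SumsOverCycles

variable {V M : Type*} [DecidableEq V] [AddCommMonoid M] {π : Perm V} {A c c₁ c₂ : Finset V}
  {C R : Finset (Finset V)} {u v : V}

lemma sum_erase_eq_sum_Ico (h : π.IsCycleOn c) (hu : u ∈ c) (g : V → M) :
    ∑ v ∈ c.erase u, g v = ∑ a ∈ Ico 1 #c, g ((π ^ a) u) := by
  refine (sum_nbij (fun a ↦ (π ^ a) u) (fun a ha ↦ ?_) ?_ (fun v hv ↦ ?_) fun _ _ ↦ rfl).symm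
  · rw [mem_Ico] at ha
    exact mem_erase.2 ⟨pow_apply_ne_self_of_lt_card h hu ha.1 ha.2,
      pow_apply_mem_of_forall_apply_mem (fun _ hx ↦ h.1.mapsTo hx) a u hu⟩
  · exact (pow_apply_injOn_range h hu).mono (by rw [coe_subset, range_eq_Ico]; gcongr; simp)
  · rw [mem_coe, mem_erase] at hv
    obtain ⟨i, hi, rfl⟩ := h.exists_pow_eq hu hv.2
    have h0 : i ≠ 0 := by
      rintro rfl
      exact hv.1 rfl
    exact ⟨i, mem_coe.2 (mem_Ico.2 ⟨Nat.one_le_iff_ne_zero.2 h0, hi⟩), rfl⟩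

namespace IsCyclePartition

lemma sum_eq (h : IsCyclePartition π A C) (g : V → M) : ∑ v ∈ A, g v = ∑ c ∈ C, ∑ v ∈ c, g v := by
  rw [← h.biUnion_eq]
  exact sum_biUnion h.pairwiseDisjoint

lemma sum_offDiag (h : IsCyclePartition π A C) (f : V → V → M) :
    ∑ p ∈ A.offDiag, f p.1 p.2 =
      ∑ c ∈ C, ∑ d ∈ C.erase c, ∑ u ∈ c, ∑ v ∈ d, f u v +
      ∑ c ∈ C, ∑ u ∈ c, ∑ a ∈ Ico 1 #c, f u ((π ^ a) u) := by
  have hsigma : ∑ p ∈ A.offDiag, f p.1 p.2 = ∑ u ∈ A, ∑ v ∈ A.erase u, f u v := by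
    rw [sum_sigma']
    exact sum_nbij' (fun p ↦ ⟨p.1, p.2⟩) (fun p ↦ (p.1, p.2)) (by simp +contextual [eq_comm])
      (by simp +contextual [eq_comm]) (by simp) (by simp) (by simp)
  have herase : ∀ c ∈ C, ∀ u ∈ c, ∑ v ∈ A.erase u, f u v =
      ∑ d ∈ C.erase c, ∑ v ∈ d, f u v + ∑ a ∈ Ico 1 #c, f u ((π ^ a) u) := by
    intro c hc u hu
    have hsdiff : A.erase u \ c.erase u = A \ c := by
      ext x
      by_cases hx : x = u <;> simp [hx, hu]
    rw [← sum_sdiff (erase_subset_erase u (h.subset hc)), hsdiff, (h.erase hc).sum_eq,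
      sum_erase_eq_sum_Ico (h.isCycleOn c hc) hu]
  rw [hsigma, h.sum_eq, ← sum_add_distrib]
  refine sum_congr rfl fun c hc ↦ ?_
  rw [sum_congr rfl (herase c hc), sum_add_distrib, sum_comm]

lemma nonempty_of_nonempty (h : IsCyclePartition π A C) (hA : A.Nonempty) : C.Nonempty := by
  obtain ⟨x, hx⟩ := hA
  obtain ⟨c, hc, -⟩ := h.mem_iff.1 hx
  exact ⟨c, hc⟩

lemma forall_apply_mem (h : IsCyclePartition π A C) : ∀ x ∈ A, π x ∈ A := fun x hx ↦ by
  obtain ⟨c, hc, hxc⟩ := h.mem_iff.1 hx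
  exact h.mem_iff.2 ⟨c, hc, h.apply_mem hc x hxc⟩

lemma biUnion_subset (h : IsCyclePartition π A C) {S : Finset (Finset V)} (hS : S ⊆ C) :
    S.biUnion id ⊆ A := by
  rw [← h.biUnion_eq]
  exact biUnion_subset_biUnion_of_subset_left id hS

/-- A `π`-stable set containing `c₁` and missing `c₂` is the union of `c₁` and some of the
remaining cycles. -/
lemma sum_separating (h : IsCyclePartition π A (Insert.insert c₁ (Insert.insert c₂ R)))
    (h₁ : c₁ ∉ Insert.insert c₂ R) (h₂ : c₂ ∉ R) (hu : u ∈ c₁) (hv : v ∈ c₂) {G : Finset V → M}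
    (hG : ∀ B, G B ≠ 0 → ∀ x ∈ B, π x ∈ B) :
    ∑ B ∈ A.powerset with u ∈ B ∧ v ∉ B, G B =
      ∑ T ∈ R.powerset, G ((Insert.insert c₁ T).biUnion id) := by
  set D := Insert.insert c₁ (Insert.insert c₂ R) with hD
  have hc₁ : c₁ ∈ D := by simp [hD]
  have hc₂ : c₂ ∈ D := by simp [hD]
  have hR : R ⊆ D := (subset_insert _ _).trans (subset_insert _ _)
  have hsub {T : Finset (Finset V)} (hT : T ⊆ R) : Insert.insert c₁ T ⊆ D :=
    insert_subset hc₁ (hT.trans hR)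
  have hfilter {B : Finset V} (hB : B ⊆ A) (hπ : ∀ x ∈ B, π x ∈ B) (huB : u ∈ B) (hvB : v ∉ B) :
      (Insert.insert c₁ {c ∈ R | c ⊆ B}).biUnion id = B := by
    conv_rhs => rw [← h.biUnion_filter_subset hB hπ, hD, filter_insert,
      if_pos (subset_of_isCycleOn (h.isCycleOn c₁ hc₁) hπ hu huB), filter_insert,
      if_neg fun hc ↦ hvB (hc hv)]
  rw [← sum_filter_of_ne fun B _ ↦ hG B]
  refine sum_nbij' (fun B ↦ {c ∈ R | c ⊆ B}) (fun T ↦ (Insert.insert c₁ T).biUnion id)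
    (fun B _ ↦ mem_powerset.2 (filter_subset _ _)) (fun T hT ↦ ?_) (fun B hB ↦ ?_) (fun T hT ↦ ?_)
    (fun B hB ↦ ?_)
  · rw [mem_powerset] at hT
    have hT' := h.mono (hsub hT)
    simp only [mem_filter, mem_powerset]
    refine ⟨⟨h.biUnion_subset (hsub hT), hT'.mem_iff.2 ⟨c₁, mem_insert_self _ _, hu⟩,
      fun hvT ↦ ?_⟩, hT'.forall_apply_mem⟩
    obtain ⟨c, hc, hvc⟩ := hT'.mem_iff.1 hvT
    obtain rfl := h.eq_of_mem (hsub hT hc) hc₂ hvc hv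
    exact (mem_insert.1 hc).elim (fun hcc ↦ h₁ (by simp [hcc])) fun hcT ↦ h₂ (hT hcT)
  · simp only [mem_filter, mem_powerset] at hB
    exact hfilter hB.1.1 hB.2 hB.1.2.1 hB.1.2.2
  · rw [mem_powerset] at hT
    ext c
    rw [mem_filter]
    refine ⟨fun ⟨hc, hcT⟩ ↦ ?_, fun hc ↦ ⟨hT hc, subset_biUnion_of_mem id (mem_insert_of_mem hc)⟩⟩
    rw [h.subset_biUnion_iff (hsub hT) (hR hc)] at hcT
    exact mem_of_mem_insert_of_ne hcT fun hcc ↦ h₁ (by simp [← hcc, hc])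
  · simp only [mem_filter, mem_powerset] at hB
    rw [hfilter hB.1.1 hB.2 hB.1.2.1 hB.1.2.2]

end IsCyclePartition

end SumsOverCycles

section HurwitzFormula

variable {V : Type*} [Fintype V] [DecidableEq V] {π ρ : Perm V} {A B c c₁ c₂ d : Finset V}
  {C R T : Finset (Finset V)} {u v : V} {m : ℕ}

variable (V) in
/-- Hurwitz's formula, together with the vanishing below genus zero, for factorizations into `m`
transpositions. -/
def HurwitzFormula (m : ℕ) : Prop := ∀ (A : Finset V) (π : Perm V) (C : Finset (Finset V)),
  IsCyclePartition π A C → A.Nonempty → m + 2 ≤ #A + #C →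
    factorizationCount A π m = genusZeroFactor m (#A + #C) *
      ((#A : ℚ) ^ ((#C : ℤ) - 3) * ∏ c ∈ C, cycleWeight #c)

lemma HurwitzFormula.eq_of_insert (hm : HurwitzFormula V m)
    (h : IsCyclePartition π A (insert c T)) (hc : c ∉ T) (hA : m + 2 ≤ #A + (#T + 1)) :
    factorizationCount A π m = genusZeroFactor m (#A + (#T + 1)) *
      (cycleWeight #c * (∏ d ∈ T, cycleWeight #d) * hurwitzPow (fun d ↦ (#d : ℚ)) #c T) := by
  have hne : A.Nonempty :=
    (h.nonempty c (mem_insert_self _ _)).mono (h.subset (mem_insert_self _ _))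
  rw [← card_insert_of_notMem hc] at hA ⊢
  rw [hm A π _ h hne hA, prod_insert hc, hurwitzPow, card_insert_of_notMem hc, h.card_eq,
    sum_insert hc]
  push_cast
  rw [show (#T : ℤ) + 1 - 3 = #T - 2 by ring]
  ring

lemma sum_splitCount_of_notMem (ih : ∀ i ≤ m, HurwitzFormula V i)
    (h : IsCyclePartition ρ A (insert c₁ (insert c₂ R))) (h₁ : c₁ ∉ insert c₂ R) (h₂ : c₂ ∉ R)
    (hu : u ∈ c₁) (hv : v ∈ c₂) (hm : m + 2 ≤ #A + #R) :
    ∑ B ∈ A.powerset with u ∈ B ∧ v ∉ B, splitCount A B ρ m =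
      genusZeroFactor m (#A + #R) * (cycleWeight #c₁ * cycleWeight #c₂ * (∏ c ∈ R, cycleWeight #c) *
        ∑ T ∈ R.powerset, hurwitzPow (fun c ↦ (#c : ℚ)) #c₁ T *
          hurwitzPow (fun c ↦ (#c : ℚ)) #c₂ (R \ T)) := by
  rw [h.sum_separating h₁ h₂ hu hv fun B ↦ apply_mem_of_splitCount_ne_zero, mul_sum, mul_sum]
  refine sum_congr rfl fun T hT ↦ ?_
  rw [mem_powerset] at hT
  have hsub : insert c₁ T ⊆ insert c₁ (insert c₂ R) :=
    insert_subset_insert _ (hT.trans (subset_insert _ _))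
  have hsdiff : insert c₁ (insert c₂ R) \ insert c₁ T = insert c₂ (R \ T) := by
    rw [insert_sdiff_insert, sdiff_insert_of_notMem h₁,
      insert_sdiff_of_notMem _ fun hc ↦ h₂ (hT hc)]
  have hB := h.mono hsub
  have hB' := h.mono (sdiff_subset (s := insert c₁ (insert c₂ R)) (t := insert c₁ T))
  rw [← h.sdiff_biUnion hsub, hsdiff] at hB'
  set B := (insert c₁ T).biUnion id
  have hcardA := card_sdiff_add_card_eq_card (h.biUnion_subset hsub)
  have hcardR := card_sdiff_add_card_eq_card hT
  have hposB : 0 < #B := card_pos.2 ⟨u, hB.mem_iff.2 ⟨c₁, mem_insert_self _ _, hu⟩⟩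
  have hposB' : 0 < #(A \ B) := card_pos.2 ⟨v, hB'.mem_iff.2 ⟨c₂, mem_insert_self _ _, hv⟩⟩
  rw [splitCount, sum_antidiagonal_genusZeroFactor (s := #B + (#T + 1))
    (t := #(A \ B) + (#(R \ T) + 1)) (by lia) (by lia) (by lia)
    (fun i hi ↦ (ih i hi).eq_of_insert hB fun hc ↦ h₁ (mem_insert_of_mem (hT hc)))
    (fun i hi ↦ (ih i hi).eq_of_insert hB' fun hc ↦ h₂ (sdiff_subset hc)), ← prod_sdiff hT,
    show #B + (#T + 1) + (#(A \ B) + (#(R \ T) + 1)) - 2 = #A + #R by lia]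
  ring

lemma sum_splitCount_of_mem (h : IsCyclePartition ρ A C) (hc : c ∈ C) (hu : u ∈ c) (hv : v ∈ c) :
    ∑ B ∈ A.powerset with u ∈ B ∧ v ∉ B, splitCount A B ρ m = 0 := by
  refine sum_eq_zero fun B hB ↦ ?_
  obtain ⟨-, huB, hvB⟩ := mem_filter.1 hB
  by_contra hne
  exact hvB (subset_of_isCycleOn (h.isCycleOn c hc) (apply_mem_of_splitCount_ne_zero hne) hu huB hv)

variable (V) in
lemma hurwitzFormula_zero : HurwitzFormula V 0 := by
  intro A π C h hA _
  have hC := h.nonempty_of_nonempty hA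
  have hA₀ := card_pos.2 hA
  have hC₀ := card_pos.2 hC
  rw [factorizationCount, listSum_zero, genusZeroFactor, connects_nil]
  by_cases hA₁ : #A = 1
  · obtain ⟨x, rfl⟩ := card_eq_one.1 hA₁
    have hC₁ : C = {{x}} := eq_singleton_iff_nonempty_unique_mem.2 ⟨hC, fun c hc ↦
      (subset_singleton_iff.1 (h.subset hc)).resolve_left (h.nonempty c hc).ne_empty⟩
    have hπ : π x = x := by simpa using h.forall_apply_mem x (mem_singleton_self x)
    rw [iverson_of_true (by simp [hπ])]
    simp [hC₁, cycleWeight, mapWeight]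
  · rw [iverson_of_false fun hA ↦ hA₁ hA.1, if_neg (by lia), zero_mul]

lemma HurwitzFormula.join (ih : HurwitzFormula V m) (h : IsCyclePartition π A C) (hc : c ∈ C)
    (hd : d ∈ C.erase c) (hu : u ∈ c) (hv : v ∈ d) (hm : m + 3 ≤ #A + #C) :
    factorizationCount A (swap u v * π) m +
        ∑ B ∈ A.powerset with u ∈ B ∧ v ∉ B, splitCount A B (swap u v * π) m =
      genusZeroFactor m (#A + #C - 1) * ((#A : ℚ) ^ ((#C : ℤ) - 4) *
        (cycleWeight (#c + #d) * ∏ e ∈ (C.erase c).erase d, cycleWeight #e)) := by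
  have hjoin := h.join hc hd hu hv
  have hnotMem := h.union_notMem hc hd
  have hcard : #(insert (c ∪ d) ((C.erase c).erase d)) + 1 = #C := by
    rw [card_insert_of_notMem hnotMem, card_erase_add_one hd, card_erase_add_one hc]
  have hdisj : Disjoint c d :=
    h.pairwiseDisjoint hc (mem_of_mem_erase hd) (ne_of_mem_erase hd).symm
  rw [sum_splitCount_of_mem hjoin (mem_insert_self _ _) (mem_union_left _ hu)
    (mem_union_right _ hv), add_zero, ih A _ _ hjoin ⟨u, h.subset hc hu⟩ (by lia),
    prod_insert hnotMem, card_union_of_disjoint hdisj, ← hcard]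
  push_cast
  rw [show (#(insert (c ∪ d) ((C.erase c).erase d)) : ℤ) + 1 - 4 =
    #(insert (c ∪ d) ((C.erase c).erase d)) - 3 by ring]
  rfl

lemma HurwitzFormula.cut (ih : ∀ i ≤ m, HurwitzFormula V i) (h : IsCyclePartition π A C)
    (hc : c ∈ C) (hu : u ∈ c) {a : ℕ} (h0 : 0 < a) (ha : a < #c) (hv : (π ^ a) u = v)
    (hm : m + 3 ≤ #A + #C) :
    factorizationCount A (swap u v * π) m +
        ∑ B ∈ A.powerset with u ∈ B ∧ v ∉ B, splitCount A B (swap u v * π) m =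
      genusZeroFactor m (#A + #C - 1) *
        (cycleWeight a * cycleWeight (#c - a) * (∏ e ∈ C.erase c, cycleWeight #e) *
          ∑ T ∈ (C.erase c).powerset, hurwitzPow (fun e ↦ (#e : ℚ)) a T *
            hurwitzPow (fun e ↦ (#e : ℚ)) (#c - a : ℕ) (C.erase c \ T)) := by
  obtain ⟨c₁, c₂, huc₁, hvc₂, hcard₁, hcard₂, h₁, h₂, hcut⟩ := h.cut hc hu h0 ha hv
  have hC := card_erase_add_one hc
  have hcard : #(insert c₁ (insert c₂ (C.erase c))) = #C + 1 := by
    rw [card_insert_of_notMem h₁, card_insert_of_notMem h₂, hC]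
  rw [ih m le_rfl A _ _ hcut ⟨u, h.subset hc hu⟩ (by lia), hcard, genusZeroFactor,
    if_neg (by lia), zero_mul, zero_add, sum_splitCount_of_notMem ih hcut h₁ h₂ huc₁ hvc₂ (by lia),
    hcard₁, hcard₂, show #A + #(C.erase c) = #A + #C - 1 by lia]

lemma HurwitzFormula.succ (ih : ∀ i ≤ m, HurwitzFormula V i) : HurwitzFormula V (m + 1) := by
  intro A π C h hA hm
  have hC := h.nonempty_of_nonempty hA
  have hidentity := sum_join_add_sum_cut (x := fun c : Finset V ↦ #c) hC
    (fun c hc ↦ card_pos.2 (h.nonempty c hc)) (n := (#A : ℚ)) (by rw [h.card_eq]; push_cast; rfl)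
  have hfactor : genusZeroFactor (m + 1) (#A + #C) =
      genusZeroFactor m (#A + #C - 1) * (#A + #C - 2) := by
    simp only [genusZeroFactor]
    by_cases hm' : m + 1 + 2 = #A + #C
    · rw [if_pos hm', if_pos (by lia), Nat.factorial_succ]
      have : (m : ℚ) + 1 + 2 = #A + #C := by exact_mod_cast hm'
      push_cast
      linear_combination (m.factorial : ℚ) * this
    · rw [if_neg hm', if_neg (by lia), zero_mul]
  rw [factorizationCount_succ, h.sum_offDiag fun u v ↦ factorizationCount A (swap u v * π) m +
    ∑ B ∈ A.powerset with u ∈ B ∧ v ∉ B, splitCount A B (swap u v * π) m]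
  rw [sum_congr rfl fun c hc ↦ sum_congr rfl fun d hd ↦ sum_congr rfl fun u hu ↦
      sum_congr rfl fun v hv ↦ (ih m le_rfl).join h hc hd hu hv (by lia),
    sum_congr rfl fun c hc ↦ sum_congr rfl fun u hu ↦ sum_congr rfl fun a ha ↦
      HurwitzFormula.cut ih h hc hu (mem_Ico.1 ha).1 (mem_Ico.1 ha).2 rfl (by lia)]
  simp only [sum_const, nsmul_eq_mul]
  set K := genusZeroFactor m (#A + #C - 1)
  rw [hfactor]
  trans 1 / 2 * (K * (2 * (#A + #C - 2) * (#A ^ ((#C : ℤ) - 3) * ∏ c ∈ C, cycleWeight #c)))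
  · rw [← hidentity, mul_add K, mul_sum, mul_sum]
    congr 2 <;> refine sum_congr rfl fun c _ ↦ ?_
    · rw [mul_sum]
      exact sum_congr rfl fun d _ ↦ by ring
    · rw [mul_left_comm K, mul_sum _ _ K]
  · ring

variable (V) in
theorem hurwitzFormula (m : ℕ) : HurwitzFormula V m := by
  induction m using Nat.strong_induction_on with
  | _ m ih =>
    rcases m with _ | m
    · exact hurwitzFormula_zero V
    · exact .succ fun i hi ↦ ih i (by lia)

end HurwitzFormula

/-! ### Completing a pair of permutations by transpositions -/

section CompletionCount

variable {V : Type*} [Fintype V] [DecidableEq V] {σ π : Perm V} {c d : Finset V}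
  {C : Finset (Finset V)} {L L' : List (Perm V)} {a b u v : V} {m : ℕ}

/-- The number of `m`-tuples of transpositions with product `π` which, together with the
permutations in `L`, act transitively. -/
noncomputable def completionCount (L : List (Perm V)) (π : Perm V) (m : ℕ) : ℚ :=
  listSum (swapsIn univ) m fun l ↦ iverson (Connects (L ++ l) univ ∧ l.prod = π)

lemma completionCount_congr (h : ∀ B : Finset V, (∀ x ∈ B, π x ∈ B) →
    (Stabilizes L B ↔ Stabilizes L' B)) : completionCount L π m = completionCount L' π m := by
  refine listSum_congr fun l _ ↦ iverson_congr <| and_congr_left fun hl ↦ and_congr_right fun _ ↦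
    forall₃_congr fun B _ _ ↦ imp_congr_left ?_
  simp only [Stabilizes, List.forall_mem_append]
  exact and_congr_left fun hB ↦ h B (hl ▸ Stabilizes.prod_apply_mem hB)

lemma completionCount_swap (u v : V) (π : Perm V) (m : ℕ) :
    completionCount [swap u v] π m = factorizationCount univ π m +
      ∑ B ∈ univ.powerset with u ∈ B ∧ v ∉ B, splitCount univ B π m := by
  rw [← listSum_connects_swap_cons (mem_univ u) (mem_univ v)]
  exact listSum_congr fun l _ ↦ iverson_congr <| and_congr_right fun _ ↦ by simp [Perm.ext_iff]

lemma completionCount_swap_join (h : IsCyclePartition π univ C) (hc : c ∈ C) (hd : d ∈ C.erase c)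
    (hu : u ∈ c) (hv : v ∈ d) (hm : m + 3 = Fintype.card V + #C) :
    completionCount [swap u v] (swap u v * π) m = m.factorial *
      ((Fintype.card V : ℚ) ^ ((#C : ℤ) - 4) *
        (cycleWeight (#c + #d) * ∏ e ∈ (C.erase c).erase d, cycleWeight #e)) := by
  rw [completionCount_swap, (hurwitzFormula V m).join h hc hd hu hv (by simp [hm]),
    genusZeroFactor, card_univ, if_pos (by lia)]

lemma cycleWeight_one : cycleWeight 1 = 1 := by
  simp [cycleWeight, mapWeight]

/-- The contribution of a cycle of length `e` to the Abel sum which counts completions after a cycle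
of length `k + 1` has been cut into a fixed point and a cycle of length `k`. -/
def cutTerm (k e : ℕ) : ℚ :=
  e * (k + 1 + e) * (1 / (1 + e) + 1 / (k + e))

lemma completionCount_swap_cut (h : IsCyclePartition π univ C) (hc : c ∈ C) (hu : u ∈ c)
    (hv : π u = v) {k : ℕ} (hk : 0 < k) (hck : #c = k + 1) (hm : m + 3 = Fintype.card V + #C) :
    completionCount [swap u v] (swap u v * π) m = m.factorial *
      ((Fintype.card V : ℚ) ^ ((#C : ℤ) - 4) * (cycleWeight k / k *
        (∏ e ∈ C.erase c, cycleWeight #e) * ((k + 1) * Fintype.card V * (1 + 1 / k) -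
          ∑ e ∈ C.erase c, cutTerm k #e))) := by
  have habel := sum_hurwitzPow_mul_hurwitzPow (a := 1) (b := k) (U := C.erase c)
    (x := fun e ↦ (#e : ℚ)) one_pos (by exact_mod_cast hk) fun e he ↦ by
      exact_mod_cast card_pos.2 (h.nonempty e (mem_of_mem_erase he))
  have hsum : (1 + k + ∑ e ∈ C.erase c, (#e : ℚ)) = Fintype.card V := by
    rw [← card_univ, h.card_eq, ← add_sum_erase C _ hc, hck]
    push_cast
    ring
  have hcard : (#(C.erase c) : ℤ) - 3 = #C - 4 := by
    have := card_erase_add_one hc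
    lia
  rw [hsum, hcard] at habel
  rw [completionCount_swap, HurwitzFormula.cut (fun i _ ↦ hurwitzFormula V i) h hc hu one_pos
    (by lia) (by simpa) (by simp [hm]), genusZeroFactor, card_univ, if_pos (by lia), hck,
    Nat.add_sub_cancel, cycleWeight_one, Nat.cast_one]
  have hk' : (k : ℚ) ≠ 0 := by exact_mod_cast hk.ne'
  rw [one_mul, mul_comm (k : ℚ), ← eq_div_iff hk'] at habel
  rw [habel, add_comm (1 : ℚ) k]
  simp only [cutTerm]
  ring

/-- The swap of `c` and `d` connects nothing new: the product of the transpositions already maps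
`d` to `c`. -/
lemma completionCount_swap_mul_swap {σ : Perm V} {a b c d : V} (h : [a, b, c, d].Nodup)
    (hd : σ d = d) (m : ℕ) :
    completionCount [σ, swap a b * swap c d] ((swap a b * swap c d)⁻¹ * σ⁻¹) m =
      completionCount [swap a b] (swap a b * (swap c d * σ⁻¹)) m := by
  have hcomm : swap a b * swap c d = swap c d * swap a b :=
    (Perm.disjoint_swap_swap h).commute
  obtain ⟨⟨-, hac, had⟩, ⟨hbc, -⟩, -⟩ : (a ≠ b ∧ a ≠ c ∧ a ≠ d) ∧ (b ≠ c ∧ b ≠ d) ∧ c ≠ d := by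
    simpa using h
  have hπ : (swap a b * swap c d)⁻¹ * σ⁻¹ = swap a b * (swap c d * σ⁻¹) := by
    rw [hcomm, mul_inv_rev, swap_inv, swap_inv, mul_assoc]
  rw [hπ]
  refine completionCount_congr fun B hB ↦ ?_
  have hnil : Stabilizes ([] : List (Perm V)) B := by simp [Stabilizes]
  rw [stabilizes_swap_cons, stabilizes_cons, stabilizes_cons, iff_true_intro hnil, and_true,
    and_true]
  refine ⟨fun h ↦ ?_, fun hab ↦ ?_⟩
  · have := apply_mem_iff_of_forall_apply_mem h.2 a
    rw [Perm.mul_apply, swap_apply_of_ne_of_ne hac had, swap_apply_left] at this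
    exact this.symm
  · have hcd : c ∈ B ↔ d ∈ B := by
      have := apply_mem_iff_of_forall_apply_mem hB d
      rwa [Perm.mul_apply, Perm.mul_apply, Perm.inv_eq_iff_eq.2 hd.symm, swap_apply_right,
        swap_apply_of_ne_of_ne hac.symm hbc.symm] at this
    have hσ₂ : ∀ x ∈ B, (swap a b * swap c d) x ∈ B := fun x hx ↦
      forall_swap_apply_mem_iff.2 hab _ (forall_swap_apply_mem_iff.2 hcd x hx)
    refine ⟨fun x hx ↦ ?_, hσ₂⟩
    rw [← apply_mem_iff_of_forall_apply_mem hB, ← hπ, ← apply_mem_iff_of_forall_apply_mem hσ₂]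
    simpa using hx

end CompletionCount

/-! ### Relative positions of a 3-cycle and a product of two transpositions -/

section CycleSizes

variable {V : Type*} {c d X : Finset V} {C : Finset (Finset V)}
  {s : Multiset ℕ} {π : Perm V} {u v : V} {m : ℕ}

/-- The multiset of lengths of the cycles in `C`. -/
def cycleSizes (C : Finset (Finset V)) : Multiset ℕ :=
  C.val.map card

lemma sum_eq_of_cycleSizes_eq {M : Type*} [AddCommMonoid M] (h : cycleSizes C = s) (f : ℕ → M) :
    ∑ c ∈ C, f #c = (s.map f).sum := by
  rw [← h, cycleSizes, Multiset.map_map]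
  rfl

lemma prod_eq_of_cycleSizes_eq {M : Type*} [CommMonoid M] (h : cycleSizes C = s) (f : ℕ → M) :
    ∏ c ∈ C, f #c = (s.map f).prod := by
  rw [← h, cycleSizes, Multiset.map_map]
  rfl

lemma card_eq_of_cycleSizes_eq (h : cycleSizes C = s) : #C = s.card := by
  rw [← h, cycleSizes, Multiset.card_map, card_val]

variable [DecidableEq V]

lemma cycleSizes_insert (hc : c ∉ C) : cycleSizes (insert c C) = #c ::ₘ cycleSizes C := by
  simp [cycleSizes, hc]

lemma cycleSizes_erase (hc : c ∈ C) (h : cycleSizes C = #c ::ₘ s) : cycleSizes (C.erase c) = s := by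
  rwa [← insert_erase hc, cycleSizes_insert (notMem_erase c C), Multiset.cons_inj_right] at h

lemma IsCyclePartition.cycleSizes_join {A : Finset V} (h : IsCyclePartition π A C) (hc : c ∈ C)
    (hd : d ∈ C.erase c) (hs : cycleSizes C = #c ::ₘ #d ::ₘ s) :
    cycleSizes (Insert.insert (c ∪ d) ((C.erase c).erase d)) = (#c + #d) ::ₘ s := by
  have hdisj : Disjoint c d :=
    h.pairwiseDisjoint hc (mem_of_mem_erase hd) (ne_of_mem_erase hd).symm
  rw [cycleSizes_insert (h.union_notMem hc hd), cycleSizes_erase hd (cycleSizes_erase hc hs),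
    card_union_of_disjoint hdisj]

variable [Fintype V]

lemma isCyclePartition_univ_of_isCycleOn (h : π.IsCycleOn X) (hX : X.Nonempty)
    (hfix : ∀ x ∉ X, π x = x) : IsCyclePartition π univ (insert X (powersetCard 1 Xᶜ)) := by
  have hcompl : IsCyclePartition π Xᶜ (powersetCard 1 Xᶜ) := by
    rw [powersetCard_one]
    refine ⟨by simp, fun c hc ↦ ?_, ?_, by ext; simp⟩
    · obtain ⟨x, hx, rfl⟩ := mem_map.1 hc
      simpa using hfix x (mem_compl.1 hx)
    · simp +contextual [Set.PairwiseDisjoint, Set.Pairwise, Function.onFun, eq_comm]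
  simpa using hcompl.insert hX h disjoint_compl_right

lemma cycleSizes_insert_powersetCard_compl (hX : X.Nonempty) :
    cycleSizes (insert X (powersetCard 1 Xᶜ)) =
      #X ::ₘ Multiset.replicate (Fintype.card V - #X) 1 := by
  rw [cycleSizes_insert, cycleSizes, ← card_compl]
  · simp [powersetCard_one]
  · obtain ⟨x, hx⟩ := hX
    intro h
    exact mem_compl.1 ((mem_powersetCard.1 h).1 hx) hx

lemma completionCount_swap_join_of_cycleSizes (h : IsCyclePartition π univ C) (hc : c ∈ C)
    (hd : d ∈ C.erase c) (hu : u ∈ c) (hv : v ∈ d) (hs : cycleSizes C = s)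
    (hn : Fintype.card V = s.card + 3) (hm : m + 6 = 2 * Fintype.card V) :
    completionCount [swap u v] (swap u v * π) m = m.factorial *
      ((Fintype.card V : ℚ) ^ ((Fintype.card V : ℤ) - 7) * (cycleWeight (#c + #d) *
        ((s.map cycleWeight).prod / (cycleWeight #c * cycleWeight #d)))) := by
  have hC := card_eq_of_cycleSizes_eq hs
  have hprod := prod_eq_of_cycleSizes_eq hs cycleWeight
  rw [← mul_prod_erase C _ hc, ← mul_prod_erase (C.erase c) _ hd, ← mul_assoc] at hprod
  have hne : cycleWeight #c * cycleWeight #d ≠ 0 :=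
    mul_ne_zero (cycleWeight_ne_zero (card_ne_zero_of_mem hu))
      (cycleWeight_ne_zero (card_ne_zero_of_mem hv))
  rw [completionCount_swap_join h hc hd hu hv (by lia), ← hprod, mul_div_cancel_left₀ _ hne,
    show (#C : ℤ) - 4 = Fintype.card V - 7 by lia]

lemma completionCount_swap_cut_of_cycleSizes (h : IsCyclePartition π univ C) (hc : c ∈ C)
    (hu : u ∈ c) (hv : π u = v) {k : ℕ} (hk : 0 < k) (hck : #c = k + 1) (hs : cycleSizes C = s)
    (hn : Fintype.card V = s.card + 3) (hm : m + 6 = 2 * Fintype.card V) :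
    completionCount [swap u v] (swap u v * π) m = m.factorial *
      ((Fintype.card V : ℚ) ^ ((Fintype.card V : ℤ) - 7) * (cycleWeight k / k *
        ((s.map cycleWeight).prod / cycleWeight (k + 1)) *
          ((k + 1) * Fintype.card V * (1 + 1 / k) -
            ((s.map (cutTerm k)).sum - cutTerm k (k + 1))))) := by
  have hC := card_eq_of_cycleSizes_eq hs
  have hprod := prod_eq_of_cycleSizes_eq hs cycleWeight
  have hsum := sum_eq_of_cycleSizes_eq hs (cutTerm k)
  rw [← mul_prod_erase C _ hc, hck] at hprod
  rw [← add_sum_erase C _ hc, hck] at hsum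
  rw [completionCount_swap_cut h hc hu hv hk hck (by lia), ← hprod,
    mul_div_cancel_left₀ _ (cycleWeight_ne_zero k.succ_ne_zero), ← hsum, add_sub_cancel_left,
    show (#C : ℤ) - 4 = Fintype.card V - 7 by lia]

end CycleSizes

section RelativePosition

variable {V : Type*} [Fintype V] [DecidableEq V] {X : Finset V} {σ : Perm V} {c d : V}

lemma exists_isCyclePartition_swap_mul_of_notMem (hσ : σ.IsCycleOn X) (hX : X.Nonempty)
    (hfix : ∀ x ∉ X, σ x = x) (hc : c ∉ X) (hd : d ∉ X) (hcd : c ≠ d) :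
    ∃ C, IsCyclePartition (swap c d * σ) univ C ∧ X ∈ C ∧
      (∀ x ∉ X, x ≠ c → x ≠ d → {x} ∈ C) ∧
      ∃ k, Fintype.card V = #X + 2 + k ∧ cycleSizes C = 2 ::ₘ #X ::ₘ Multiset.replicate k 1 := by
  have h := isCyclePartition_univ_of_isCycleOn hσ hX hfix
  have hsing : ∀ x ∉ X, {x} ∈ insert X (powersetCard 1 Xᶜ) := fun x hx ↦ by
    simp [powersetCard_one, hx]
  obtain ⟨k, hk⟩ : ∃ k, Fintype.card V = #X + 2 + k := by
    refine Nat.exists_eq_add_of_le ?_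
    rw [← card_add_card_compl X, ← card_pair hcd]
    gcongr
    simp [insert_subset_iff, hc, hd]
  have hd' : {d} ∈ (insert X (powersetCard 1 Xᶜ)).erase {c} :=
    mem_erase.2 ⟨by simpa using hcd.symm, hsing d hd⟩
  have hne : ∀ {x : V}, x ∉ X → X ≠ {x} := fun hx h ↦ hx (h ▸ mem_singleton_self _)
  refine ⟨_, h.join (hsing c hc) hd' (mem_singleton_self c) (mem_singleton_self d), ?_, ?_, k, hk,
    h.cycleSizes_join (hsing c hc) hd' ?_⟩
  · simp [hne hc, hne hd]
  · intro x hx hxc hxd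
    simp [hxc, hxd, hx, powersetCard_one]
  · rw [cycleSizes_insert_powersetCard_compl hX, hk, add_assoc, Nat.add_sub_cancel_left, add_comm,
      Multiset.replicate_succ, Multiset.replicate_succ, card_singleton, card_singleton,
      Multiset.cons_swap, Multiset.cons_swap (#X)]

lemma exists_isCyclePartition_swap_mul_of_mem (hσ : σ.IsCycleOn X) (hfix : ∀ x ∉ X, σ x = x)
    (hc : c ∈ X) (hd : d ∉ X) :
    ∃ C, IsCyclePartition (swap c d * σ) univ C ∧ X ∪ {d} ∈ C ∧
      (∀ x ∉ X, x ≠ d → {x} ∈ C) ∧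
      ∃ k, Fintype.card V = #X + 1 + k ∧ cycleSizes C = (#X + 1) ::ₘ Multiset.replicate k 1 := by
  have hX : X.Nonempty := ⟨c, hc⟩
  have h := isCyclePartition_univ_of_isCycleOn hσ hX hfix
  obtain ⟨k, hk⟩ : ∃ k, Fintype.card V = #X + 1 + k :=
    Nat.exists_eq_add_of_le <| card_insert_of_notMem hd ▸ card_le_univ _
  have hne : {d} ≠ X := fun h ↦ hd (h ▸ mem_singleton_self _)
  have hd' : {d} ∈ (insert X (powersetCard 1 Xᶜ)).erase X :=
    mem_erase.2 ⟨hne, by simp [powersetCard_one, hd]⟩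
  refine ⟨_, h.join (mem_insert_self _ _) hd' hc (mem_singleton_self d), mem_insert_self _ _, ?_,
    k, hk, h.cycleSizes_join (mem_insert_self _ _) hd' ?_⟩
  · intro x hx hxd
    have : {x} ≠ X := fun h ↦ hx (h ▸ mem_singleton_self _)
    simp [hxd, hx, powersetCard_one, this]
  · rw [cycleSizes_insert_powersetCard_compl hX, hk, add_assoc, Nat.add_sub_cancel_left, add_comm,
      Multiset.replicate_succ, card_singleton]

end RelativePosition

section PositionWeight

variable {V : Type*} [Fintype V] [DecidableEq V] {σ : Perm V} {a b c d : V} {m : ℕ}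

lemma cycleWeight_two : cycleWeight 2 = 4 := by
  norm_num [cycleWeight, mapWeight]

lemma cycleWeight_three : cycleWeight 3 = 27 / 2 := by
  norm_num [cycleWeight, mapWeight, Nat.factorial]

lemma cycleWeight_four : cycleWeight 4 = 128 / 3 := by
  norm_num [cycleWeight, mapWeight, Nat.factorial]

lemma cycleWeight_five : cycleWeight 5 = 3125 / 24 := by
  norm_num [cycleWeight, mapWeight, Nat.factorial]

/-- The contribution of `swap a b * swap c d` to the Hurwitz number, up to the common factor
`m! * n ^ (n - 7)`, in terms of the numbers of points of `{a, b}` and of `{c, d}` on the 3-cycle. -/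
def positionWeight (n : ℚ) : ℕ → ℕ → ℚ
  | 0, 0 => 216
  | 0, 1 | 1, 0 => 512 / 3
  | 1, 1 => 3125 / 24
  | 0, 2 | 2, 0 => 4 * (7 * n + 65) / 3
  | 1, 2 | 2, 1 => 3 / 8 * (19 * n + 180)
  | _, _ => 0

lemma positionWeight_comm (n : ℚ) (i j : ℕ) : positionWeight n i j = positionWeight n j i := by
  rcases i with _ | _ | _ | i <;> rcases j with _ | _ | _ | j <;> rfl

lemma isCycleOn_support (hσ : σ.IsThreeCycle) : σ.IsCycleOn σ.support := by
  simpa [Perm.coe_support_eq_set_support, Function.IsFixedPt] using hσ.isCycle.isCycleOn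

lemma apply_eq_or_apply_eq_of_isThreeCycle (hσ : σ.IsThreeCycle) (ha : a ∈ σ.support)
    (hb : b ∈ σ.support) (hab : a ≠ b) : σ a = b ∨ σ b = a := by
  rw [hσ.support_eq_iff_mem_support.2 ha, mem_insert, mem_insert, mem_singleton] at hb
  obtain rfl | rfl | rfl := hb
  · exact absurd rfl hab
  · exact .inl rfl
  · have h3 : (σ ^ 3) a = a := by rw [← hσ.orderOf, pow_orderOf_eq_one, Perm.one_apply]
    exact .inr <| by simpa [pow_succ] using h3

lemma completionCount_eq_positionWeight_zero_zero (hσ : σ.IsThreeCycle)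
    (hab : a ≠ b) (hac : a ≠ c) (had : a ≠ d) (hbc : b ≠ c) (hbd : b ≠ d)
    (hcd : c ≠ d) (ha : a ∉ σ.support) (hb : b ∉ σ.support) (hc : c ∉ σ.support)
    (hd : d ∉ σ.support) (hm : m + 6 = 2 * Fintype.card V) :
    completionCount [swap a b] (swap a b * (swap c d * σ)) m =
      m.factorial * ((Fintype.card V : ℚ) ^ ((Fintype.card V : ℤ) - 7) *
        positionWeight (Fintype.card V) 0 0) := by
  obtain ⟨C, hC, -, hsing, k, hk, hs⟩ := exists_isCyclePartition_swap_mul_of_notMem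
    (isCycleOn_support hσ) (card_pos.1 (by simp [hσ.card_support]))
    (fun x ↦ Perm.notMem_support.1) hc hd hcd
  rw [hσ.card_support] at hk hs
  have hbC : {b} ∈ C.erase {a} := mem_erase.2 ⟨by simpa using hab.symm, hsing b hb hbc hbd⟩
  rw [completionCount_swap_join_of_cycleSizes hC (hsing a ha hac had) hbC (mem_singleton_self a)
    (mem_singleton_self b) hs (by grind [Multiset.card_cons, Multiset.card_replicate]) hm]
  norm_num [positionWeight, hσ.card_support, cycleWeight_one, cycleWeight_two, cycleWeight_three,
    cycleWeight_four, cycleWeight_five, cutTerm]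

lemma completionCount_eq_positionWeight_one_zero (hσ : σ.IsThreeCycle)
    (hbc : b ≠ c) (hbd : b ≠ d) (hcd : c ≠ d) (ha : a ∈ σ.support)
    (hb : b ∉ σ.support) (hc : c ∉ σ.support) (hd : d ∉ σ.support)
    (hm : m + 6 = 2 * Fintype.card V) :
    completionCount [swap a b] (swap a b * (swap c d * σ)) m =
      m.factorial * ((Fintype.card V : ℚ) ^ ((Fintype.card V : ℤ) - 7) *
        positionWeight (Fintype.card V) 1 0) := by
  obtain ⟨C, hC, hX, hsing, k, hk, hs⟩ := exists_isCyclePartition_swap_mul_of_notMem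
    (isCycleOn_support hσ) (card_pos.1 (by simp [hσ.card_support]))
    (fun x ↦ Perm.notMem_support.1) hc hd hcd
  rw [hσ.card_support] at hk hs
  have hbC : {b} ∈ C.erase σ.support :=
    mem_erase.2 ⟨fun h ↦ hb (h ▸ mem_singleton_self b), hsing b hb hbc hbd⟩
  rw [completionCount_swap_join_of_cycleSizes hC hX hbC ha (mem_singleton_self b) hs
    (by grind [Multiset.card_cons, Multiset.card_replicate]) hm]
  norm_num [positionWeight, hσ.card_support, cycleWeight_one, cycleWeight_two, cycleWeight_three,
    cycleWeight_four, cycleWeight_five, cutTerm]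

lemma completionCount_eq_positionWeight_two_zero (hσ : σ.IsThreeCycle)
    (hbc : b ≠ c) (hbd : b ≠ d) (hcd : c ≠ d) (ha : a ∈ σ.support)
    (hab : σ a = b) (hc : c ∉ σ.support) (hd : d ∉ σ.support)
    (hm : m + 6 = 2 * Fintype.card V) :
    completionCount [swap a b] (swap a b * (swap c d * σ)) m =
      m.factorial * ((Fintype.card V : ℚ) ^ ((Fintype.card V : ℤ) - 7) *
        positionWeight (Fintype.card V) 2 0) := by
  obtain ⟨C, hC, hX, -, k, hk, hs⟩ := exists_isCyclePartition_swap_mul_of_notMem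
    (isCycleOn_support hσ) (card_pos.1 (by simp [hσ.card_support]))
    (fun x ↦ Perm.notMem_support.1) hc hd hcd
  rw [hσ.card_support] at hk hs
  have hv : (swap c d * σ) a = b := by
    rw [Perm.mul_apply, hab, swap_apply_of_ne_of_ne hbc hbd]
  rw [completionCount_swap_cut_of_cycleSizes hC hX ha hv two_pos hσ.card_support hs
    (by grind [Multiset.card_cons, Multiset.card_replicate]) hm]
  congr 2
  have hn : (Fintype.card V : ℚ) = 5 + k := by exact_mod_cast hk
  norm_num [positionWeight, hσ.card_support, cycleWeight_one, cycleWeight_two, cycleWeight_three,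
    cycleWeight_four, cycleWeight_five, cutTerm]
  linarith

lemma completionCount_eq_positionWeight_zero_one (hσ : σ.IsThreeCycle)
    (hab : a ≠ b) (had : a ≠ d) (hbd : b ≠ d) (ha : a ∉ σ.support)
    (hb : b ∉ σ.support) (hc : c ∈ σ.support) (hd : d ∉ σ.support)
    (hm : m + 6 = 2 * Fintype.card V) :
    completionCount [swap a b] (swap a b * (swap c d * σ)) m =
      m.factorial * ((Fintype.card V : ℚ) ^ ((Fintype.card V : ℤ) - 7) *
        positionWeight (Fintype.card V) 0 1) := by
  obtain ⟨C, hC, -, hsing, k, hk, hs⟩ := exists_isCyclePartition_swap_mul_of_mem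
    (isCycleOn_support hσ) (fun x ↦ Perm.notMem_support.1) hc hd
  rw [hσ.card_support] at hk hs
  have hbC : {b} ∈ C.erase {a} := mem_erase.2 ⟨by simpa using hab.symm, hsing b hb hbd⟩
  rw [completionCount_swap_join_of_cycleSizes hC (hsing a ha had) hbC (mem_singleton_self a)
    (mem_singleton_self b) hs (by grind [Multiset.card_cons, Multiset.card_replicate]) hm]
  norm_num [positionWeight, hσ.card_support, cycleWeight_one, cycleWeight_two, cycleWeight_three,
    cycleWeight_four, cycleWeight_five, cutTerm]

lemma completionCount_eq_positionWeight_one_one (hσ : σ.IsThreeCycle)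
    (hbd : b ≠ d) (ha : a ∈ σ.support) (hb : b ∉ σ.support)
    (hc : c ∈ σ.support) (hd : d ∉ σ.support) (hm : m + 6 = 2 * Fintype.card V) :
    completionCount [swap a b] (swap a b * (swap c d * σ)) m =
      m.factorial * ((Fintype.card V : ℚ) ^ ((Fintype.card V : ℤ) - 7) *
        positionWeight (Fintype.card V) 1 1) := by
  obtain ⟨C, hC, hX, hsing, k, hk, hs⟩ := exists_isCyclePartition_swap_mul_of_mem
    (isCycleOn_support hσ) (fun x ↦ Perm.notMem_support.1) hc hd
  rw [hσ.card_support] at hk hs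
  have hbX : b ∉ σ.support ∪ {d} := by simpa [hbd] using hb
  have hbC : {b} ∈ C.erase (σ.support ∪ {d}) :=
    mem_erase.2 ⟨fun h ↦ hbX (h ▸ mem_singleton_self b), hsing b hb hbd⟩
  rw [completionCount_swap_join_of_cycleSizes hC hX hbC (mem_union_left _ ha)
    (mem_singleton_self b) hs (by grind [Multiset.card_cons, Multiset.card_replicate]) hm,
    card_union_of_disjoint (by simpa using hd)]
  norm_num [positionWeight, hσ.card_support, cycleWeight_one, cycleWeight_two, cycleWeight_three,
    cycleWeight_four, cycleWeight_five, cutTerm]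

lemma completionCount_eq_positionWeight_two_one (hσ : σ.IsThreeCycle)
    (hbc : b ≠ c) (hbd : b ≠ d) (ha : a ∈ σ.support) (hab : σ a = b)
    (hc : c ∈ σ.support) (hd : d ∉ σ.support) (hm : m + 6 = 2 * Fintype.card V) :
    completionCount [swap a b] (swap a b * (swap c d * σ)) m =
      m.factorial * ((Fintype.card V : ℚ) ^ ((Fintype.card V : ℤ) - 7) *
        positionWeight (Fintype.card V) 2 1) := by
  obtain ⟨C, hC, hX, -, k, hk, hs⟩ := exists_isCyclePartition_swap_mul_of_mem
    (isCycleOn_support hσ) (fun x ↦ Perm.notMem_support.1) hc hd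
  rw [hσ.card_support] at hk hs
  have hv : (swap c d * σ) a = b := by
    rw [Perm.mul_apply, hab, swap_apply_of_ne_of_ne hbc hbd]
  have hcard : #(σ.support ∪ {d}) = 3 + 1 := by
    rw [card_union_of_disjoint (by simpa using hd), hσ.card_support, card_singleton]
  rw [completionCount_swap_cut_of_cycleSizes hC hX (mem_union_left _ ha) hv three_pos hcard hs
    (by grind [Multiset.card_cons, Multiset.card_replicate]) hm]
  congr 2
  have hn : (Fintype.card V : ℚ) = 4 + k := by exact_mod_cast hk
  norm_num [positionWeight, hσ.card_support, cycleWeight_one, cycleWeight_two, cycleWeight_three,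
    cycleWeight_four, cycleWeight_five, cutTerm]
  linarith

lemma completionCount_swap_eq_positionWeight (hσ : σ.IsThreeCycle) (h : [a, b, c, d].Nodup)
    (hd : d ∉ σ.support) (hm : m + 6 = 2 * Fintype.card V) :
    completionCount [swap a b] (swap a b * (swap c d * σ)) m =
      m.factorial * ((Fintype.card V : ℚ) ^ ((Fintype.card V : ℤ) - 7) *
        positionWeight (Fintype.card V) #({a, b} ∩ σ.support) #({c, d} ∩ σ.support)) := by
  obtain ⟨⟨hab, hac, had⟩, ⟨hbc, hbd⟩, hcd⟩ :
      (a ≠ b ∧ a ≠ c ∧ a ≠ d) ∧ (b ≠ c ∧ b ≠ d) ∧ c ≠ d := by simpa using h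
  wlog hba : b ∈ σ.support → a ∈ σ.support generalizing a b
  · rw [Classical.not_imp] at hba
    rw [swap_comm, pair_comm]
    exact this (by grind) hab.symm hbc hbd hac had fun _ ↦ hba.1
  wlog hσab : b ∈ σ.support → σ a = b generalizing a b
  · rw [Classical.not_imp] at hσab
    have ha := hba hσab.1
    have hσba := (apply_eq_or_apply_eq_of_isThreeCycle hσ ha hσab.1 hab).resolve_left hσab.2
    rw [swap_comm, pair_comm]
    exact this (by grind) hab.symm hbc hbd hac had (fun _ ↦ hσab.1) fun _ ↦ hσba
  by_cases hb : b ∈ σ.support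
  · by_cases hc : c ∈ σ.support
    · simpa [hba hb, hb, hc, hd, hab, card_pair] using
        completionCount_eq_positionWeight_two_one hσ hbc hbd (hba hb) (hσab hb) hc hd hm
    · simpa [hba hb, hb, hc, hd, hab, card_pair] using
        completionCount_eq_positionWeight_two_zero hσ hbc hbd hcd (hba hb) (hσab hb) hc hd hm
  · by_cases ha : a ∈ σ.support <;> by_cases hc : c ∈ σ.support
    · simpa [ha, hb, hc, hd] using completionCount_eq_positionWeight_one_one hσ hbd ha hb hc hd hm
    · simpa [ha, hb, hc, hd] using
        completionCount_eq_positionWeight_one_zero hσ hbc hbd hcd ha hb hc hd hm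
    · simpa [ha, hb, hc, hd] using
        completionCount_eq_positionWeight_zero_one hσ hab had hbd ha hb hc hd hm
    · simpa [ha, hb, hc, hd] using completionCount_eq_positionWeight_zero_zero
        hσ hab hac had hbc hbd hcd ha hb hc hd hm

theorem completionCount_eq_positionWeight (hσ : σ.IsThreeCycle) (h : [a, b, c, d].Nodup)
    (hm : m + 6 = 2 * Fintype.card V) :
    completionCount [σ, swap a b * swap c d] ((swap a b * swap c d)⁻¹ * σ⁻¹) m =
      m.factorial * ((Fintype.card V : ℚ) ^ ((Fintype.card V : ℤ) - 7) *
        positionWeight (Fintype.card V) #({a, b} ∩ σ.support) #({c, d} ∩ σ.support)) := by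
  wlog hd : d ∉ σ.support generalizing a b c d
  · by_cases hc : c ∈ σ.support
    · rw [(Perm.disjoint_swap_swap h).commute.eq, positionWeight_comm]
      by_cases hb : b ∈ σ.support
      · have ha : a ∉ σ.support := fun ha ↦ by
          have hsub : [a, b, c, d].toFinset ⊆ σ.support := fun x hx ↦ by
            simp only [List.mem_toFinset] at hx; grind
          have := card_le_card hsub
          rw [List.toFinset_card_of_nodup h, hσ.card_support] at this
          simp at this
        rw [swap_comm a b, pair_comm a b]
        exact this (by grind) ha
      · exact this (by grind) hb
    · rw [swap_comm c d, pair_comm c d]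
      exact this (by grind) hc
  rw [completionCount_swap_mul_swap h (Perm.notMem_support.1 hd),
    completionCount_swap_eq_positionWeight hσ.inv h (by rwa [Perm.support_inv]) hm,
    Perm.support_inv]

end PositionWeight

section DoubleTranspositions

lemma cast_card_offDiag {V : Type*} (S : Finset V) : (#S.offDiag : ℚ) = #S * (#S - 1) := by
  classical
  rw [offDiag_card, Nat.cast_sub (Nat.le_mul_self _)]
  push_cast
  ring

/-- The sum of `f i` over the ordered pairs of distinct elements of a set, where `i` is the number
of members of the pair that lie in a subset with `p` elements inside the set and `q` outside. -/
def pairSum (p q : ℚ) (f : ℕ → ℚ) : ℚ :=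
  p * (p - 1) * f 2 + 2 * p * q * f 1 + q * (q - 1) * f 0

variable {V : Type*} [DecidableEq V]

lemma sum_offDiag_card_pair_inter (X S : Finset V) (f : ℕ → ℚ) :
    ∑ p ∈ S.offDiag, f #({p.1, p.2} ∩ X) = pairSum #(S ∩ X) #(S \ X) f := by
  have sum_eq {T : Finset (V × V)} {k : ℕ} (hT : ∀ p ∈ T, #({p.1, p.2} ∩ X) = k) :
      ∑ p ∈ T, f #({p.1, p.2} ∩ X) = #T * f k := by
    rw [sum_congr rfl fun p hp ↦ congrArg f (hT p hp), sum_const, nsmul_eq_mul]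
  have hS : S.offDiag = (S ∩ X).offDiag ∪ (S \ X).offDiag ∪ (S ∩ X) ×ˢ (S \ X) ∪
      (S \ X) ×ˢ (S ∩ X) := by
    rw [← offDiag_union (disjoint_sdiff_inter S X).symm, union_comm, sdiff_union_inter]
  rw [hS, sum_union (by grind [disjoint_left]), sum_union (by grind [disjoint_left]),
    sum_union (by grind [disjoint_left]), sum_eq (k := 2) (by grind), sum_eq (k := 0) (by grind),
    sum_eq (k := 1) (by grind), sum_eq (k := 1) (by grind), cast_card_offDiag, cast_card_offDiag,
    card_product, card_product, pairSum]
  push_cast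
  ring

lemma sum_offDiag_sum_offDiag_sdiff (X S : Finset V) (f : ℕ → ℕ → ℚ) :
    ∑ p ∈ S.offDiag, ∑ q ∈ (S \ {p.1, p.2}).offDiag, f #({p.1, p.2} ∩ X) #({q.1, q.2} ∩ X) =
      pairSum #(S ∩ X) #(S \ X) fun i ↦ pairSum (#(S ∩ X) - i) (#(S \ X) - 2 + i) (f i) := by
  rw [← sum_offDiag_card_pair_inter X S fun i ↦ pairSum (#(S ∩ X) - i) (#(S \ X) - 2 + i) (f i)]
  refine sum_congr rfl fun p hp ↦ ?_
  obtain ⟨h1, h2, hne⟩ := mem_offDiag.1 hp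
  have hinter : #((S \ {p.1, p.2}) ∩ X) + #({p.1, p.2} ∩ X) = #(S ∩ X) := by
    rw [← card_union_of_disjoint (by grind [disjoint_left])]
    congr 1
    grind
  have hsdiff : #((S \ {p.1, p.2}) \ X) + 2 = #(S \ X) + #({p.1, p.2} ∩ X) := by
    rw [← card_pair hne, ← card_sdiff_add_card_inter {p.1, p.2} X, ← add_assoc,
      ← card_union_of_disjoint (by grind [disjoint_left])]
    congr 2
    grind
  rw [sum_offDiag_card_pair_inter]
  congr 1
  · exact eq_sub_of_add_eq (by exact_mod_cast hinter)
  · rw [sub_add_eq_add_sub]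
    exact eq_sub_of_add_eq (by exact_mod_cast hsdiff)

variable [Fintype V]

lemma apply_apply_of_cycleType {σ : Perm V} (hσ : σ.cycleType = {2, 2}) (x : V) :
    σ (σ x) = x := by
  have ho : orderOf σ = 2 := by rw [← Perm.lcm_cycleType, hσ]; rfl
  have h2 : (σ ^ 2) x = x := by rw [← ho, pow_orderOf_eq_one, Perm.one_apply]
  simpa [pow_succ] using h2

lemma nodup_of_cycleType {σ : Perm V} (hσ : σ.cycleType = {2, 2}) {a c : V}
    (ha : a ∈ σ.support) (hc : c ∈ σ.support \ {a, σ a}) : [a, σ a, c, σ c].Nodup := by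
  have := apply_apply_of_cycleType hσ
  grind [Perm.mem_support]

lemma swap_apply_mul_swap_apply_of_cycleType {σ : Perm V} (hσ : σ.cycleType = {2, 2}) {a c : V}
    (ha : a ∈ σ.support) (hc : c ∈ σ.support \ {a, σ a}) :
    swap a (σ a) * swap c (σ c) = σ := by
  have hsq := apply_apply_of_cycleType hσ
  have hnodup := nodup_of_cycleType hσ ha hc
  have hsupp : [a, σ a, c, σ c].toFinset = σ.support := by
    refine eq_of_subset_of_card_le (fun x hx ↦ ?_) ?_
    · simp only [List.mem_toFinset] at hx
      grind [Perm.apply_mem_support]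
    · rw [List.toFinset_card_of_nodup hnodup, ← Perm.sum_cycleType, hσ]
      rfl
  ext x
  have hx : x ∉ [a, σ a, c, σ c] → σ x = x := fun hx ↦
    Perm.notMem_support.1 fun h ↦ hx (List.mem_toFinset.1 (hsupp ▸ h))
  rw [Perm.mul_apply]
  grind

lemma mem_sigma_offDiag_sdiff {t : (_ : V × V) × V × V} :
    (t ∈ univ.offDiag.sigma fun p ↦ (univ \ {p.1, p.2}).offDiag) ↔
      [t.1.1, t.1.2, t.2.1, t.2.2].Nodup := by
  simp only [mem_sigma, mem_offDiag]
  grind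

lemma card_swap_mul_swap_eq {σ : Perm V} (hσ : σ.cycleType = {2, 2}) :
    #{t ∈ univ.offDiag.sigma fun p : V × V ↦ (univ \ {p.1, p.2}).offDiag |
      swap t.1.1 t.1.2 * swap t.2.1 t.2.2 = σ} = 8 := by
  have hsupp : #σ.support = 4 := by rw [← Perm.sum_cycleType, hσ]; rfl
  have hpairs : #(σ.support.sigma fun a ↦ σ.support \ {a, σ a}) = 8 := by
    rw [card_sigma, sum_const_nat (m := 2), hsupp]
    intro a ha
    have hsub : {a, σ a} ⊆ σ.support := by grind [Perm.apply_mem_support]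
    rw [card_sdiff_of_subset hsub, hsupp, card_pair (Perm.mem_support.1 ha).symm]
  rw [← hpairs]
  have happly {a b c d : V} (h : [a, b, c, d].Nodup) :
      swap a b (swap c d a) = b ∧ swap a b (swap c d c) = d := by grind
  refine card_nbij' (fun t ↦ ⟨t.1.1, t.2.1⟩) (fun s ↦ ⟨(s.1, σ s.1), s.2, σ s.2⟩) ?_ ?_ ?_ ?_
  · rintro ⟨⟨a, b⟩, c, d⟩ ht
    simp only [coe_filter, mem_sigma_offDiag_sdiff, Set.mem_ofPred_eq] at ht
    obtain ⟨h, rfl⟩ := ht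
    simp only [coe_sigma, Set.mem_sigma_iff, mem_coe, mem_sdiff, Perm.mem_support]
    grind [happly h, Perm.mul_apply]
  · rintro ⟨a, c⟩ hs
    simp only [coe_sigma, Set.mem_sigma_iff, mem_coe] at hs
    simp only [coe_filter, mem_sigma_offDiag_sdiff, Set.mem_ofPred_eq]
    exact ⟨nodup_of_cycleType hσ hs.1 hs.2, swap_apply_mul_swap_apply_of_cycleType hσ hs.1 hs.2⟩
  · rintro ⟨⟨a, b⟩, c, d⟩ ht
    simp only [coe_filter, mem_sigma_offDiag_sdiff, Set.mem_ofPred_eq] at ht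
    obtain ⟨h, rfl⟩ := ht
    simpa using happly h
  · exact fun _ _ ↦ rfl

lemma sum_swap_mul_swap (f : Perm V → ℚ) :
    ∑ p ∈ (univ : Finset V).offDiag, ∑ q ∈ (univ \ {p.1, p.2}).offDiag,
        f (swap p.1 p.2 * swap q.1 q.2) =
      8 * ∑ σ : Perm V with σ.cycleType = {2, 2}, f σ := by
  have maps_to (t) (ht : t ∈ univ.offDiag.sigma fun p : V × V ↦ (univ \ {p.1, p.2}).offDiag) :
      swap t.1.1 t.1.2 * swap t.2.1 t.2.2 ∈ ({σ | σ.cycleType = {2, 2}} : Finset (Perm V)) :=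
    mem_filter.2
      ⟨mem_univ _, Perm.cycleType_swap_mul_swap_of_nodup (mem_sigma_offDiag_sdiff.1 ht)⟩
  rw [sum_sigma', ← sum_fiberwise_of_maps_to maps_to, mul_sum]
  refine sum_congr rfl fun σ hσ ↦ ?_
  rw [sum_congr rfl fun t ht ↦ congrArg f (mem_filter.1 ht).2, sum_const,
    card_swap_mul_swap_eq (mem_filter.1 hσ).2, nsmul_eq_mul, Nat.cast_ofNat]

end DoubleTranspositions

section Total

variable {V : Type*} [Fintype V]

lemma forall_exists_mem_closure_iff_connects [Nonempty V] (l : List (Perm V)) :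
    (∀ x y, ∃ g ∈ Subgroup.closure {τ | τ ∈ l}, g x = y) ↔ Connects l univ := by
  classical
  constructor
  · refine fun h ↦ ⟨univ_nonempty, fun B _ ⟨x, hx⟩ hB ↦ eq_univ_iff_forall.2 fun y ↦ ?_⟩
    obtain ⟨g, hg, rfl⟩ := h x y
    suffices ∀ w, g w ∈ B ↔ w ∈ B from (this x).2 hx
    induction hg using Subgroup.closure_induction with
    | mem τ hτ => exact apply_mem_iff_of_forall_apply_mem (hB τ hτ)
    | one => simp
    | mul g₁ g₂ _ _ h₁ h₂ => exact fun w ↦ (h₁ _).trans (h₂ w)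
    | inv g _ h => exact fun w ↦ by simpa using (h (g⁻¹ w)).symm
  · intro h x y
    have horbit := h.2 {y | ∃ g ∈ Subgroup.closure {τ | τ ∈ l}, g x = y} (subset_univ _)
      ⟨x, by simpa using ⟨1, one_mem _, rfl⟩⟩ ?_
    · have hy := mem_univ y
      rw [← horbit] at hy
      exact (mem_filter.1 hy).2
    · intro τ hτ w hw
      obtain ⟨g, hg, rfl⟩ := (mem_filter.1 hw).2
      exact mem_filter.2 ⟨mem_univ _, τ * g, mul_mem (Subgroup.subset_closure hτ) hg, rfl⟩

variable [DecidableEq V]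

lemma sum_completionCount_of_isThreeCycle {σ : Perm V} (hσ : σ.IsThreeCycle) {m : ℕ}
    (hm : m + 6 = 2 * Fintype.card V) :
    ∑ τ : Perm V with τ.cycleType = {2, 2}, completionCount [σ, τ] (τ⁻¹ * σ⁻¹) m =
      m.factorial * ((Fintype.card V : ℚ) ^ ((Fintype.card V : ℤ) - 7) *
        (9 * (Fintype.card V - 3) * Fintype.card V *
          (3 * (Fintype.card V : ℚ) ^ 2 - 15 * Fintype.card V + 20))) := by
  have hsupp : (#(univ \ σ.support) : ℚ) = Fintype.card V - 3 := by
    rw [cast_card_sdiff (subset_univ _), hσ.card_support, card_univ, Nat.cast_ofNat]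
  have hsum := sum_swap_mul_swap fun τ ↦ completionCount [σ, τ] (τ⁻¹ * σ⁻¹) m
  rw [sum_congr rfl fun p hp ↦ sum_congr rfl fun q hq ↦
    completionCount_eq_positionWeight hσ (mem_sigma_offDiag_sdiff (t := ⟨p, q⟩) |>.1
      (mem_sigma.2 ⟨hp, hq⟩)) hm, sum_offDiag_sum_offDiag_sdiff σ.support univ fun i j ↦
    m.factorial * ((Fintype.card V : ℚ) ^ ((Fintype.card V : ℤ) - 7) *
      positionWeight (Fintype.card V) i j), univ_inter, hsupp, hσ.card_support] at hsum
  simp only [pairSum, positionWeight] at hsum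
  push_cast at hsum
  linear_combination -hsum / 8

lemma card_isThreeCycle_mul_factorial (h : 3 ≤ Fintype.card V) :
    #{σ : Perm V | σ.cycleType = {3}} * (3 * (Fintype.card V - 3).factorial) =
      (Fintype.card V).factorial := by
  have := Perm.card_of_cycleType_mul_eq (α := V) {3}
  simpa [h, mul_comm] using this

theorem natCard_eq_sum_completionCount [Nonempty V] (s t : Multiset ℕ) (m : ℕ) :
    (Nat.card {p : Perm V × Perm V × (Fin m → Perm V) //
        p.1.cycleType = s ∧ p.2.1.cycleType = t ∧ (∀ i, (p.2.2 i).IsSwap) ∧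
          p.1 * p.2.1 * (List.ofFn p.2.2).prod = 1 ∧
          ∀ x y : V, ∃ g ∈ Subgroup.closure ({p.1, p.2.1} ∪ Set.range p.2.2), g x = y} : ℚ) =
      ∑ σ : Perm V with σ.cycleType = s, ∑ τ : Perm V with τ.cycleType = t,
        completionCount [σ, τ] (τ⁻¹ * σ⁻¹) m := by
  have hiff (σ τ : Perm V) (f : Fin m → Perm V) : ((∀ i, (f i).IsSwap) ∧
      σ * τ * (List.ofFn f).prod = 1 ∧
      ∀ x y, ∃ g ∈ Subgroup.closure ({σ, τ} ∪ Set.range f), g x = y) ↔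
      (∀ i, f i ∈ swapsIn univ) ∧ Connects ([σ, τ] ++ List.ofFn f) univ ∧
        (List.ofFn f).prod = τ⁻¹ * σ⁻¹ := by
    have hset : {ρ | ρ ∈ [σ, τ] ++ List.ofFn f} = {σ, τ} ∪ Set.range f := by
      ext ρ
      simp [List.mem_ofFn, or_assoc]
    have hswap (i) : f i ∈ swapsIn univ ↔ (f i).IsSwap := by
      simp [mem_swapsIn, Perm.IsSwap, eq_comm]
    rw [← forall_exists_mem_closure_iff_connects, hset, mul_eq_one_iff_inv_eq, mul_inv_rev,
      and_comm (a := _ = _), eq_comm (a := τ⁻¹ * σ⁻¹), forall_congr' hswap]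
  let e : {p : Perm V × Perm V × (Fin m → Perm V) //
      p.1.cycleType = s ∧ p.2.1.cycleType = t ∧ (∀ i, (p.2.2 i).IsSwap) ∧
        p.1 * p.2.1 * (List.ofFn p.2.2).prod = 1 ∧
        ∀ x y : V, ∃ g ∈ Subgroup.closure ({p.1, p.2.1} ∪ Set.range p.2.2), g x = y} ≃
      Σ q : {σ : Perm V // σ.cycleType = s} × {τ : Perm V // τ.cycleType = t},
        {f : Fin m → Perm V // (∀ i, f i ∈ swapsIn univ) ∧
          Connects ([q.1.1, q.2.1] ++ List.ofFn f) univ ∧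
            (List.ofFn f).prod = q.2.1⁻¹ * q.1.1⁻¹} :=
    { toFun p := ⟨(⟨p.1.1, p.2.1⟩, ⟨p.1.2.1, p.2.2.1⟩), p.1.2.2, (hiff _ _ _).1 p.2.2.2⟩
      invFun q := ⟨(q.1.1, q.1.2, q.2), q.1.1.2, q.1.2.2, (hiff _ _ _).2 q.2.2⟩ }
  rw [Nat.card_congr e, Nat.card_sigma, Nat.cast_sum, Fintype.sum_prod_type]
  rw [sum_subtype _ (p := fun σ : Perm V ↦ σ.cycleType = s) (by simp)]
  refine sum_congr rfl fun σ _ ↦ ?_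
  rw [sum_subtype _ (p := fun σ : Perm V ↦ σ.cycleType = t) (by simp)]
  exact sum_congr rfl fun τ _ ↦ natCard_tuples_eq_listSum _ m fun l ↦
    Connects ([σ.1, τ.1] ++ l) univ ∧ l.prod = τ.1⁻¹ * σ.1⁻¹

end Total

end HurwitzNumber

open HurwitzNumber in
theorem hurwitz_number_2_1_1_2_general {V : Type*} [Fintype V] [DecidableEq V]
    (hV : 4 ≤ Fintype.card V) {m : ℕ} (hm : m + 6 = 2 * Fintype.card V) :
    (Nat.card {p : Perm V × Perm V × (Fin m → Perm V) //
        p.1.cycleType = {3} ∧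
        p.2.1.cycleType = {2, 2} ∧
        (∀ i, (p.2.2 i).IsSwap) ∧
        p.1 * p.2.1 * (List.ofFn p.2.2).prod = 1 ∧
        (∀ x y : V, ∃ g ∈ Subgroup.closure ({p.1, p.2.1} ∪ Set.range p.2.2), g x = y)} : ℚ) =
      ((Fintype.card V).factorial : ℚ) *
        (3 * (3 * (Fintype.card V : ℚ) ^ 2 - 15 * (Fintype.card V : ℚ) + 20)) *
        ((m.factorial : ℚ) / ((Fintype.card V - 4).factorial : ℚ)) *
        (Fintype.card V : ℚ) ^ ((Fintype.card V : ℤ) - 6) := by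
  have : Nonempty V := Fintype.card_pos_iff.1 (by lia)
  have hsum (σ : Perm V) (hσ : σ ∈ ({σ | σ.cycleType = {3}} : Finset (Perm V))) :=
    sum_completionCount_of_isThreeCycle (Finset.mem_filter.1 hσ).2 hm
  rw [natCard_eq_sum_completionCount, Finset.sum_congr rfl hsum, Finset.sum_const, nsmul_eq_mul,
    ← card_isThreeCycle_mul_factorial (by lia)]
  obtain ⟨k, hk⟩ := Nat.exists_eq_add_of_le' hV
  have hpow : (Fintype.card V : ℚ) ^ ((Fintype.card V : ℤ) - 6) =
      (Fintype.card V : ℚ) ^ ((Fintype.card V : ℤ) - 7) * Fintype.card V := by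
    rw [← zpow_add_one₀ (by rw [hk]; positivity)]
    ring_nf
  have hfact : (Fintype.card V - 3).factorial = (k + 1) * k.factorial := by
    rw [hk, ← Nat.factorial_succ]; rfl
  rw [hpow, hfact, hk, Nat.add_sub_cancel]
  push_cast
  field_simp
  ring

/-- Theorem 1.2, second formula. Genus-zero Hurwitz number h_{2^1,1^2}: one branch point of cycle type (3,1^{n-3}), one of cycle type (2,2,1^{n-4}), and 2n-6 transpositions; h_{2^1,1^2} = 3(3n^2-15n+20)((2n-6)!/(n-4)!) n^(n-6). -/
theorem hurwitz_number_2_1_1_2 (n : ℕ) (hn : 4 ≤ n) :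
    (Nat.card {p : Perm (Fin n) × Perm (Fin n) × (Fin (2 * n - 6) → Perm (Fin n)) //
        p.1.cycleType = {3} ∧
        p.2.1.cycleType = {2, 2} ∧
        (∀ i, (p.2.2 i).IsSwap) ∧
        p.1 * p.2.1 * (List.ofFn p.2.2).prod = 1 ∧
        (∀ x y : Fin n, ∃ g ∈ Subgroup.closure ({p.1, p.2.1} ∪ Set.range p.2.2),
          g x = y)} : ℚ) =
      (n.factorial : ℚ) * (3 * (3 * (n : ℚ) ^ 2 - 15 * (n : ℚ) + 20)) *
        (((2 * n - 6).factorial : ℚ) / ((n - 4).factorial : ℚ)) *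
        (n : ℚ) ^ ((n : ℤ) - 6) := by
  simpa using hurwitz_number_2_1_1_2_general (V := Fin n) (by simpa using hn)
    (m := 2 * n - 6) (by rw [Fintype.card_fin]; lia)
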